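/- arXiv:math/0602337 — 2 statements merged into one kernel-verified Lean document; each statement's English description precedes it below -/
import Mathlib

section
/- Let u(y,t) = ∫_{ℝⁿ} K(y,z,t) u₀(z) dz, where K is the Euclidean heat kernel on ℝⁿ and u₀ : ℝⁿ → ℝ is continuous, compactly supported, nonnegative, and not identically zero. Fix x₀ ∈ ℝⁿ and t₀ > 0; for 0 < t < t₀ write τ = t₀ - t and Ĥ(y,t) = (4πτ)^{-n/2} exp(-‖x₀-y‖²/(4τ)); for r > 0 define E_r = { (y,t) : 0 < t < t₀, Ĥ(y,t) ≥ r^{-n} } and ψ_r = log Ĥ + n log r. Let Q(y,t) = t² u(y,t)( Δ log u(y,t) + n/(2t) ) and I(r) = r^{-n} ∫_{E_r} ‖∇ψ_r‖² Q dy dt. Then for all 0 < r₁ ≤ r₂ with r₂² < 4π t₀: (i) I(r₂) ≤ I(r₁); and (ii) t₀² u(x₀,t₀)( Δ log u(x₀,t₀) + n/(2t₀) ) ≥ I(r₂). -/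
open Real MeasureTheory Filter Set

/-- The Euclidean heat kernel on ℝⁿ. -/
noncomputable def heatK (n : ℕ) (x y : EuclideanSpace ℝ (Fin n)) (t : ℝ) : ℝ :=
  (4 * π * t) ^ (-(n : ℝ) / 2) * Real.exp (-‖x - y‖ ^ 2 / (4 * t))

/-- `i`-th partial derivative of `f : ℝⁿ → ℝ`. -/
noncomputable def pdv {n : ℕ} (i : Fin n) (f : EuclideanSpace ℝ (Fin n) → ℝ)
    (y : EuclideanSpace ℝ (Fin n)) : ℝ :=
  fderiv ℝ f y (EuclideanSpace.single i 1)

/-- Euclidean Laplacian (trace of the Hessian) of `f : ℝⁿ → ℝ`. -/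
noncomputable def lap {n : ℕ} (f : EuclideanSpace ℝ (Fin n) → ℝ)
    (y : EuclideanSpace ℝ (Fin n)) : ℝ :=
  ∑ i, pdv i (pdv i f) y

theorem param_fderiv {P V : Type} [NormedAddCommGroup P] [NormedSpace ℝ P] [FiniteDimensional ℝ P]
    [NormedAddCommGroup V] [InnerProductSpace ℝ V] [FiniteDimensional ℝ V] [MeasurableSpace V]
    [BorelSpace V]
    (k : P × V → ℝ) (s : Set P) (hs : IsOpen s) (hk : ContDiffOn ℝ 1 k (s ×ˢ univ))
    (f : V → ℝ) (hf : Continuous f) (hfs : HasCompactSupport f) (p : P) (hp : p ∈ s) :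
    HasFDerivAt (fun p => ∫ z, k (p, z) * f z)
      (∫ z, f z • (fderiv ℝ k (p, z)).comp (ContinuousLinearMap.inl ℝ P V)) p := by
  have ho : IsOpen (s ×ˢ (univ : Set V)) := hs.prod isOpen_univ
  have hcf : ContinuousOn (fun q : P × V => f q.2 • (fderiv ℝ k q).comp (ContinuousLinearMap.inl ℝ P V))
      (s ×ˢ univ) := by
    exact ((hf.comp continuous_snd).continuousOn (s := s ×ˢ univ)).fun_smul
      ((hk.continuousOn_fderiv_of_isOpen ho le_rfl).clm_comp continuousOn_const)
  obtain ⟨δ, hδ, hball⟩ := Metric.nhds_basis_closedBall.mem_iff.1 (hs.mem_nhds hp)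
  have hcomp : IsCompact (Metric.closedBall p δ ×ˢ tsupport f) :=
    (isCompact_closedBall p δ).prod hfs
  obtain ⟨C, hC⟩ := hcomp.exists_bound_of_continuousOn
    (hcf.mono (prod_mono hball (subset_univ _)))
  have hcs : ∀ q ∈ s, Continuous (fun z => k (q, z)) := fun q hq =>
    hk.continuousOn.comp_continuous (Continuous.prodMk_right q) (fun z => ⟨hq, mem_univ _⟩)
  apply hasFDerivAt_integral_of_dominated_of_fderiv_le
    (bound := (tsupport f).indicator (fun _ => C))
    (F' := fun q z => f z • (fderiv ℝ k (q, z)).comp (ContinuousLinearMap.inl ℝ P V))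
    (Metric.closedBall_mem_nhds p hδ)
  · filter_upwards [hs.mem_nhds hp] with q hq
    exact ((hcs q hq).mul hf).aestronglyMeasurable
  · exact ((hcs p hp).mul hf).integrable_of_hasCompactSupport hfs.mul_left
  · have : Continuous (fun z => f z • (fderiv ℝ k (p, z)).comp (ContinuousLinearMap.inl ℝ P V)) :=
      hcf.comp_continuous (Continuous.prodMk_right p) (fun z => ⟨hp, mem_univ _⟩)
    exact this.aestronglyMeasurable
  · refine Eventually.of_forall fun z q hq => ?_
    by_cases hz : z ∈ tsupport f
    · rw [indicator_of_mem hz]; exact hC (q, z) ⟨hq, hz⟩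
    · rw [indicator_of_notMem hz, image_eq_zero_of_notMem_tsupport hz]; simp
  · exact (integrable_indicator_iff hfs.isCompact.measurableSet).2
      (integrableOn_const hfs.isCompact.measure_lt_top.ne)
  · refine Eventually.of_forall fun z q hq => ?_
    have h1 : HasFDerivAt k (fderiv ℝ k (q, z)) (q, z) :=
      ((hk.contDiffAt (ho.mem_nhds ⟨hball hq, mem_univ _⟩)).differentiableAt one_ne_zero).hasFDerivAt
    have h2 : HasFDerivAt (fun q : P => (q, z)) (ContinuousLinearMap.inl ℝ P V) q :=
      hasFDerivAt_prodMk_left q z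
    exact (h1.comp q h2).mul_const (f z)

theorem param_contDiff {P V : Type} [NormedAddCommGroup P] [NormedSpace ℝ P] [FiniteDimensional ℝ P]
    [NormedAddCommGroup V] [InnerProductSpace ℝ V] [FiniteDimensional ℝ V] [MeasurableSpace V]
    [BorelSpace V]
    (k : P × V → ℝ) (s : Set P) (hs : IsOpen s) (hk : ContDiffOn ℝ (⊤ : ℕ∞) k (s ×ˢ univ))
    (f : V → ℝ) (hf : Continuous f) (hfs : HasCompactSupport f) :
    ContDiffOn ℝ (⊤ : ℕ∞) (fun p => ∫ z, k (p, z) * f z) s := by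
  obtain ⟨R, hR⟩ := hfs.isCompact.isBounded.subset_closedBall (0:V)
  let χ : ContDiffBump (0:V) := ⟨max R 1, max R 1 + 1, by positivity, by linarith⟩
  have h := contDiffOn_convolution_right_with_param (μ := (volume : Measure V)) (f := f)
    (ContinuousLinearMap.mul ℝ ℝ) (g := fun p z => k (p, -z) * χ (-z)) (s := s)
    (k := Metric.closedBall 0 (max R 1 + 1)) (n := ⊤) hs (isCompact_closedBall _ _) ?_ hf.locallyIntegrable ?_
  · have h2 : ContDiffOn ℝ (⊤ : ℕ∞) (fun p : P => (p, (0:V))) s := by fun_prop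
    refine (h.comp h2 (fun p hp => ⟨hp, mem_univ _⟩)).congr ?_
    intro p hp
    simp only [convolution_def, Function.comp_apply, ContinuousLinearMap.mul_apply', zero_sub, neg_neg]
    congr 1
    ext z
    by_cases hz : z ∈ tsupport f
    · rw [χ.one_of_mem_closedBall]
      · ring
      · exact Metric.closedBall_subset_closedBall (le_max_left _ _) (hR hz)
    · rw [image_eq_zero_of_notMem_tsupport hz]; simp
  · intro p z hp hz
    rw [χ.zero_of_le_dist]
    · simp
    · simp at hz ⊢; exact hz.le
  · apply ContDiffOn.mul
    · exact hk.comp (g := k) (f := fun q : P × V => (q.1, -q.2)) (by fun_prop) (fun q hq => ⟨hq.1, mem_univ _⟩)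
    · exact (χ.contDiff.comp contDiff_neg).comp contDiff_snd |>.contDiffOn

theorem ly_ball_div {V : Type} [NormedAddCommGroup V] [InnerProductSpace ℝ V] [FiniteDimensional ℝ V]
    [Nontrivial V] [MeasurableSpace V] [BorelSpace V]
    (X : V → ℝ) (hX : ContDiff ℝ 1 X) (x₀ : V) (R : ℝ)
    (hS : ∀ y ∈ Metric.sphere x₀ R, X y = 0) (e : V) :
    ∫ y in Metric.closedBall x₀ R, fderiv ℝ X y e = 0 := by
  classical
  obtain ⟨C, hC⟩ := (isCompact_closedBall x₀ R).exists_bound_of_continuousOn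
    (hX.continuous_fderiv one_ne_zero).continuousOn
  set B := Metric.closedBall x₀ R with hB
  have hlip : ∀ x ∈ B, ∀ y ∈ B, ‖X x - X y‖ ≤ C * ‖x - y‖ := by
    intro x hx y hy
    exact (convex_closedBall x₀ R).norm_image_sub_le_of_norm_fderiv_le
      (fun z _ => hX.differentiable one_ne_zero z) hC hy hx
  let Y : V → ℝ := B.indicator X
  have key : ∀ x ∈ B, ∀ y ∉ B, ‖X x‖ ≤ |C| * ‖x - y‖ := by
    intro x hx y hy
    have hy' : R < dist y x₀ := by simpa [hB] using hy
    obtain ⟨p, hp, hps⟩ := (convex_segment (𝕜 := ℝ) x y).isPreconnected.intermediate_value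
      (left_mem_segment ℝ x y) (right_mem_segment ℝ x y)
      (f := fun z => dist z x₀) (by fun_prop) (show R ∈ Icc (dist x x₀) (dist y x₀) from ⟨hx, hy'.le⟩)
    have hps : p ∈ Metric.sphere x₀ R := hps
    have h1 := hlip x hx p (Metric.sphere_subset_closedBall hps)
    rw [hS p hps, sub_zero] at h1
    have h2 : ‖x - p‖ ≤ ‖x - y‖ := by
      have := dist_add_dist_of_mem_segment hp
      rw [← dist_eq_norm, ← dist_eq_norm]
      linarith [dist_nonneg (x := p) (y := y)]
    calc ‖X x‖ ≤ C * ‖x - p‖ := h1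
      _ ≤ |C| * ‖x - p‖ := by gcongr; exact le_abs_self C
      _ ≤ _ := by gcongr
  have hY : LipschitzWith (Real.toNNReal |C|) Y := by
    apply LipschitzWith.of_dist_le_mul
    intro x y
    rw [Real.coe_toNNReal _ (abs_nonneg C), dist_eq_norm, dist_eq_norm]
    by_cases hx : x ∈ B <;> by_cases hy : y ∈ B
    · simp only [Y, indicator_of_mem hx, indicator_of_mem hy]
      refine (hlip x hx y hy).trans ?_
      gcongr; exact le_abs_self C
    · simp only [Y, indicator_of_mem hx, indicator_of_notMem hy, sub_zero]
      exact key x hx y hy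
    · simp only [Y, indicator_of_notMem hx, indicator_of_mem hy, zero_sub, norm_neg]
      rw [norm_sub_rev]
      exact key y hy x hx
    · simp only [Y, indicator_of_notMem hx, indicator_of_notMem hy, sub_zero, norm_zero]
      positivity
  have hcs : HasCompactSupport Y := by
    apply HasCompactSupport.intro (isCompact_closedBall x₀ R)
    intro x hx
    exact indicator_of_notMem hx X
  have h0 := LipschitzWith.integral_lineDeriv_mul_eq (μ := (volume : Measure V)) (f := fun _ : V => (1:ℝ)) (g := Y)
    (C := 0) (LipschitzWith.const _) hY hcs (-e)
  simp only [neg_neg, mul_one] at h0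
  have h1 : ∫ x, lineDeriv ℝ Y x e = 0 := by
    rw [← h0]; simp [lineDeriv]
  rw [← h1, ← integral_indicator Metric.isClosed_closedBall.measurableSet]
  apply integral_congr_ae
  have hnull : ∀ᵐ y : V, y ∉ Metric.sphere x₀ R := by
    by_cases hR : R = 0
    · subst hR
      simp only [Metric.sphere_zero]
      exact measure_eq_zero_iff_ae_notMem.1 (measure_singleton x₀)
    · exact measure_eq_zero_iff_ae_notMem.1 (Measure.addHaar_sphere_of_ne_zero _ _ hR)
  filter_upwards [hnull] with y hy
  by_cases hyB : y ∈ B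
  · rw [indicator_of_mem hyB]
    have hyb : y ∈ Metric.ball x₀ R := by
      rw [Metric.mem_ball]; exact lt_of_le_of_ne hyB hy
    have : Y =ᶠ[nhds y] X := by
      filter_upwards [Metric.isOpen_ball.mem_nhds hyb] with z hz
      exact indicator_of_mem (Metric.ball_subset_closedBall hz) X
    rw [this.lineDeriv_eq, (hX.differentiable one_ne_zero y).lineDeriv_eq_fderiv]
  · rw [indicator_of_notMem hyB]
    have : Y =ᶠ[nhds y] fun _ => 0 := by
      filter_upwards [Metric.isClosed_closedBall.isOpen_compl.mem_nhds hyB] with z hz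
      exact indicator_of_notMem hz X
    rw [this.lineDeriv_eq]; simp [lineDeriv]

/-- Euclidean space. -/
abbrev EV (n : ℕ) := EuclideanSpace ℝ (Fin n)

/-- directional derivative on space-time -/
noncomputable def dd {n : ℕ} (w : EV n × ℝ) (f : EV n × ℝ → ℝ) (p : EV n × ℝ) : ℝ := fderiv ℝ f p w

/-- spatial coordinate direction -/
noncomputable def ei {n : ℕ} (i : Fin n) : EV n × ℝ := (EuclideanSpace.single i 1, 0)

/-- time direction -/
noncomputable def et {n : ℕ} : EV n × ℝ := (0, 1)

/-- smooth for positive time -/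
def Sm {n : ℕ} (f : EV n × ℝ → ℝ) : Prop := ∀ p : EV n × ℝ, 0 < p.2 → ContDiffAt ℝ (⊤ : ℕ∞) f p

/-- log of the heat kernel -/
noncomputable def lphi (n : ℕ) (p : EV n × ℝ) : ℝ :=
  -((n : ℝ) / 2) * Real.log (4 * π * p.2) - ‖p.1‖ ^ 2 / (4 * p.2)

theorem lphi_contDiffAt (n : ℕ) (p : EV n × ℝ) (hp : 0 < p.2) : ContDiffAt ℝ (⊤ : ℕ∞) (lphi n) p := by
  unfold lphi
  apply ContDiffAt.sub
  · apply ContDiffAt.mul contDiffAt_const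
    apply ContDiffAt.log
    · fun_prop
    · positivity
  · apply ContDiffAt.div
    · exact (contDiff_fst.norm_sq ℝ).contDiffAt
    · fun_prop
    · positivity

theorem lphi_fderiv (n : ℕ) (p : EV n × ℝ) (hp : 0 < p.2) (w : EV n × ℝ) :
    fderiv ℝ (lphi n) p w = (-((n:ℝ) / 2) / p.2 + ‖p.1‖ ^ 2 / (4 * p.2 ^ 2)) * w.2
      - inner ℝ p.1 w.1 / (2 * p.2) := by
  have h1 : HasFDerivAt (fun p : EV n × ℝ => p.2) (ContinuousLinearMap.snd ℝ (EV n) ℝ) p :=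
    hasFDerivAt_snd
  have h2 : HasFDerivAt (fun p : EV n × ℝ => ‖p.1‖ ^ 2) _ p :=
    (hasFDerivAt_fst (𝕜 := ℝ) (E := EV n) (F := ℝ) (p := p)).norm_sq
  have h3 := (((h1.const_mul (4 * π)).log (by positivity)).const_mul (-((n:ℝ)/2))).sub
    (h2.mul ((hasDerivAt_inv (x := 4 * p.2) (by positivity)).comp_hasFDerivAt p (h1.const_mul 4)))
  have h4 : fderiv ℝ (lphi n) p = _ := HasFDerivAt.fderiv (f := lphi n) h3
  rw [h4]
  simp
  field_simp
  ring

theorem heatK_eq (n : ℕ) (x z : EV n) (t : ℝ) (ht : 0 < t) :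
    heatK n x z t = Real.exp (lphi n (x - z, t)) := by
  unfold heatK lphi
  rw [Real.rpow_def_of_pos (by positivity), ← Real.exp_add]
  congr 1
  simp only
  ring

/-- heat extension -/
noncomputable def hP {n : ℕ} (f : EV n → ℝ) (p : EV n × ℝ) : ℝ := ∫ z, heatK n p.1 z p.2 * f z

theorem heatK_smooth (n : ℕ) : ContDiffOn ℝ (⊤ : ℕ∞)
    (fun q : (EV n × ℝ) × EV n => heatK n q.1.1 q.2 q.1.2) ({p | 0 < p.2} ×ˢ univ) := by
  have h : ContDiffOn ℝ (⊤ : ℕ∞)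
    (fun q : (EV n × ℝ) × EV n => Real.exp (lphi n (q.1.1 - q.2, q.1.2))) ({p | 0 < p.2} ×ˢ univ) := by
    intro q hq
    apply ContDiffAt.contDiffWithinAt
    apply ContDiffAt.exp
    exact ContDiffAt.comp (g := lphi n) (f := fun q : (EV n × ℝ) × EV n => (q.1.1 - q.2, q.1.2)) q
      (lphi_contDiffAt n (q.1.1 - q.2, q.1.2) hq.1) (by fun_prop)
  refine h.congr ?_
  intro q hq
  exact heatK_eq n _ _ _ hq.1

theorem isOpen_pos (n : ℕ) : IsOpen {p : EV n × ℝ | 0 < p.2} :=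
  isOpen_lt continuous_const continuous_snd

theorem hP_smooth {n : ℕ} (f : EV n → ℝ) (hf : Continuous f) (hfs : HasCompactSupport f) :
    Sm (hP f) := by
  intro p hp
  exact (param_contDiff (fun q : (EV n × ℝ) × EV n => heatK n q.1.1 q.2 q.1.2) {p | 0 < p.2}
    (isOpen_pos n) (heatK_smooth n) f hf hfs).contDiffAt ((isOpen_pos n).mem_nhds hp)

theorem heatK_cont (n : ℕ) (y : EV n) (t : ℝ) : Continuous (fun z => heatK n y z t) := by
  unfold heatK; fun_prop

theorem hP_fderiv {n : ℕ} (f : EV n → ℝ) (hf : Continuous f) (hfs : HasCompactSupport f)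
    (p : EV n × ℝ) (hp : 0 < p.2) (w : EV n × ℝ) :
    dd w (hP f) p = ∫ z, heatK n p.1 z p.2 * (((-((n:ℝ) / 2) / p.2 + ‖p.1 - z‖ ^ 2 / (4 * p.2 ^ 2)) * w.2
      - inner ℝ (p.1 - z) w.1 / (2 * p.2)) * f z) := by
  have hsm := (heatK_smooth n).of_le (m := 1) (by exact_mod_cast le_top)
  have h := param_fderiv (fun q : (EV n × ℝ) × EV n => heatK n q.1.1 q.2 q.1.2) {p | 0 < p.2}
    (isOpen_pos n) hsm f hf hfs p hp
  have h' : fderiv ℝ (hP f) p = _ := HasFDerivAt.fderiv (f := hP f) h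
  have ho : IsOpen ({p : EV n × ℝ | 0 < p.2} ×ˢ (univ : Set (EV n))) := (isOpen_pos n).prod isOpen_univ
  unfold dd
  have hint : Integrable (fun z => f z • (fderiv ℝ (fun q : (EV n × ℝ) × EV n => heatK n q.1.1 q.2 q.1.2) (p, z)).comp
      (ContinuousLinearMap.inl ℝ (EV n × ℝ) (EV n))) := by
    apply Continuous.integrable_of_hasCompactSupport
    · apply hf.fun_smul
      have := (hsm.continuousOn_fderiv_of_isOpen ho le_rfl).comp_continuous (Continuous.prodMk_right p)
        (fun z => ⟨hp, mem_univ _⟩)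
      exact this.clm_comp continuous_const
    · exact hfs.smul_right
  rw [h', ContinuousLinearMap.integral_apply hint]
  congr 1
  ext z
  have he : (fun q : (EV n × ℝ) × EV n => heatK n q.1.1 q.2 q.1.2) =ᶠ[nhds (p, z)]
      fun q => Real.exp (lphi n (q.1.1 - q.2, q.1.2)) := by
    filter_upwards [ho.mem_nhds (show (p, z) ∈ _ from ⟨hp, mem_univ _⟩)] with q hq
    exact heatK_eq n _ _ _ hq.1
  have hl : HasFDerivAt (lphi n) (fderiv ℝ (lphi n) (p.1 - z, p.2)) (p.1 - z, p.2) :=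
    ((lphi_contDiffAt n (p.1 - z, p.2) hp).differentiableAt (by simp)).hasFDerivAt
  let L0 : (EV n × ℝ) × EV n →L[ℝ] EV n × ℝ :=
    ContinuousLinearMap.prod ((((ContinuousLinearMap.fst ℝ (EV n) ℝ).comp (ContinuousLinearMap.fst ℝ (EV n × ℝ) (EV n))) -
        ContinuousLinearMap.snd ℝ (EV n × ℝ) (EV n))) ((ContinuousLinearMap.snd ℝ (EV n) ℝ).comp (ContinuousLinearMap.fst ℝ (EV n × ℝ) (EV n)))
  have hin : HasFDerivAt (fun q : (EV n × ℝ) × EV n => (q.1.1 - q.2, q.1.2)) L0 (p, z) :=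
    L0.hasFDerivAt
  have hcomp := (HasFDerivAt.comp (p, z) (g := lphi n) hl hin).exp
  rw [he.fderiv_eq]
  have hc' : fderiv ℝ (fun q : (EV n × ℝ) × EV n => Real.exp (lphi n (q.1.1 - q.2, q.1.2))) (p, z) = _ :=
    HasFDerivAt.fderiv (f := fun q : (EV n × ℝ) × EV n => Real.exp (lphi n (q.1.1 - q.2, q.1.2))) hcomp
  rw [hc', heatK_eq n _ _ _ hp]
  simp [lphi_fderiv n (p.1 - z, p.2) hp, L0]
  ring

theorem hP_int {n : ℕ} (f : EV n → ℝ) (hf : Continuous f) (hfs : HasCompactSupport f) (p : EV n × ℝ) :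
    Integrable (fun z => heatK n p.1 z p.2 * f z) :=
  ((heatK_cont n p.1 p.2).mul hf).integrable_of_hasCompactSupport hfs.mul_left

theorem hP_di {n : ℕ} (f : EV n → ℝ) (hf : Continuous f) (hfs : HasCompactSupport f)
    (p : EV n × ℝ) (hp : 0 < p.2) (i : Fin n) :
    dd (ei i) (hP f) p = (hP (fun z => z i * f z) p - p.1 i * hP f p) / (2 * p.2) := by
  rw [hP_fderiv f hf hfs p hp]
  unfold hP
  rw [← integral_const_mul, ← integral_sub, ← integral_div]
  · congr 1
    ext z
    simp [ei, EuclideanSpace.inner_single_right]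
    ring
  · exact hP_int (fun z => z i * f z) (by fun_prop) hfs.mul_left p
  · exact (hP_int f hf hfs p).const_mul _

theorem hP_dt {n : ℕ} (f : EV n → ℝ) (hf : Continuous f) (hfs : HasCompactSupport f)
    (p : EV n × ℝ) (hp : 0 < p.2) :
    dd et (hP f) p = ∑ i, ((hP (fun z => z i * (z i * f z)) p - 2 * p.1 i * hP (fun z => z i * f z) p
      + p.1 i ^ 2 * hP f p) / (4 * p.2 ^ 2) - hP f p / (2 * p.2)) := by
  rw [hP_fderiv f hf hfs p hp]
  unfold hP
  have i0 := hP_int f hf hfs p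
  have i1 := fun i => hP_int (fun z => z i * f z) (by fun_prop) hfs.mul_left p
  have i2 := fun i => hP_int (fun z => z i * (z i * f z)) (by fun_prop) hfs.mul_left.mul_left p
  have : ∀ i, ((∫ z, heatK n p.1 z p.2 * (z i * (z i * f z))) - 2 * p.1 i * (∫ z, heatK n p.1 z p.2 * (z i * f z))
      + p.1 i ^ 2 * (∫ z, heatK n p.1 z p.2 * f z)) / (4 * p.2 ^ 2) - (∫ z, heatK n p.1 z p.2 * f z) / (2 * p.2)
      = ∫ z, ((heatK n p.1 z p.2 * (z i * (z i * f z)) - 2 * p.1 i * (heatK n p.1 z p.2 * (z i * f z))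
       + p.1 i ^ 2 * (heatK n p.1 z p.2 * f z)) / (4 * p.2 ^ 2) - (heatK n p.1 z p.2 * f z) / (2 * p.2)) := by
    intro i
    rw [integral_sub, integral_div, integral_div, integral_add, integral_sub, integral_const_mul, integral_const_mul]
    · exact i2 i
    · exact (i1 i).const_mul _
    · exact (i2 i).sub ((i1 i).const_mul _)
    · exact i0.const_mul _
    · exact (((i2 i).sub ((i1 i).const_mul _)).add (i0.const_mul _)).div_const _
    · exact i0.div_const _
  simp_rw [this]
  rw [← integral_finsetSum]
  · congr 1
    ext z
    have hn : ‖p.1 - z‖ ^ 2 = ∑ i, (p.1 i - z i) ^ 2 := by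
      rw [EuclideanSpace.real_norm_sq_eq]; simp
    simp only [et, inner_zero_right]
    rw [hn, Finset.sum_sub_distrib, ← Finset.sum_div]
    have : ∑ i, (heatK n p.1 z p.2 * (z i * (z i * f z)) - 2 * p.1 i * (heatK n p.1 z p.2 * (z i * f z))
       + p.1 i ^ 2 * (heatK n p.1 z p.2 * f z)) = heatK n p.1 z p.2 * f z * ∑ i, (p.1 i - z i) ^ 2 := by
      rw [Finset.mul_sum]; exact Finset.sum_congr rfl fun i _ => by ring
    rw [this]
    simp
    field_simp
    ring
  · intro i _
    exact ((((i2 i).sub ((i1 i).const_mul _)).add (i0.const_mul _)).div_const _).sub (i0.div_const _)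

theorem Sm.diff {n : ℕ} {f : EV n × ℝ → ℝ} (hf : Sm f) {p : EV n × ℝ} (hp : 0 < p.2) :
    DifferentiableAt ℝ f p := (hf p hp).differentiableAt (by simp)

theorem Sm.dd {n : ℕ} {f : EV n × ℝ → ℝ} (hf : Sm f) (w : EV n × ℝ) : Sm (dd w f) := by
  intro p hp
  have h1 : ContDiffAt ℝ (⊤ : ℕ∞) (fderiv ℝ f) p := (hf p hp).fderiv_right (by simp)
  exact h1.clm_apply contDiffAt_const

theorem Sm.mul {n : ℕ} {f g : EV n × ℝ → ℝ} (hf : Sm f) (hg : Sm g) : Sm (fun p => f p * g p) :=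
  fun p hp => (hf p hp).mul (hg p hp)

theorem Sm.sub {n : ℕ} {f g : EV n × ℝ → ℝ} (hf : Sm f) (hg : Sm g) : Sm (fun p => f p - g p) :=
  fun p hp => (hf p hp).sub (hg p hp)

theorem Sm.inv {n : ℕ} {f : EV n × ℝ → ℝ} (hf : Sm f) (h0 : ∀ p : EV n × ℝ, 0 < p.2 → f p ≠ 0) :
    Sm (fun p => (f p)⁻¹) :=
  fun p hp => (hf p hp).inv (h0 p hp)

theorem Sm.const {n : ℕ} (c : ℝ) : Sm (fun _ : EV n × ℝ => c) :=
  fun _ _ => contDiffAt_const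

theorem Sm.sum {n : ℕ} {ι : Type} (s : Finset ι) {f : ι → EV n × ℝ → ℝ} (hf : ∀ i, Sm (f i)) :
    Sm (fun p => ∑ i ∈ s, f i p) :=
  fun p hp => ContDiffAt.sum fun i _ => hf i p hp

theorem dd_congr {n : ℕ} {f g : EV n × ℝ → ℝ} (h : ∀ p : EV n × ℝ, 0 < p.2 → f p = g p)
    (w : EV n × ℝ) (p : EV n × ℝ) (hp : 0 < p.2) : dd w f p = dd w g p := by
  unfold dd
  have : f =ᶠ[nhds p] g := by
    filter_upwards [(isOpen_pos n).mem_nhds hp] with q hq using h q hq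
  rw [this.fderiv_eq]

theorem dd_mul {n : ℕ} {f g : EV n × ℝ → ℝ} (w p : EV n × ℝ) (hf : DifferentiableAt ℝ f p)
    (hg : DifferentiableAt ℝ g p) :
    dd w (fun p => f p * g p) p = dd w f p * g p + f p * dd w g p := by
  unfold dd; rw [fderiv_fun_mul hf hg]; simp; ring

theorem dd_sub {n : ℕ} {f g : EV n × ℝ → ℝ} (w p : EV n × ℝ) (hf : DifferentiableAt ℝ f p)
    (hg : DifferentiableAt ℝ g p) :
    dd w (fun p => f p - g p) p = dd w f p - dd w g p := by
  unfold dd; rw [fderiv_fun_sub hf hg]; simp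

theorem dd_add {n : ℕ} {f g : EV n × ℝ → ℝ} (w p : EV n × ℝ) (hf : DifferentiableAt ℝ f p)
    (hg : DifferentiableAt ℝ g p) :
    dd w (fun p => f p + g p) p = dd w f p + dd w g p := by
  unfold dd; rw [fderiv_fun_add hf hg]; simp

theorem dd_inv {n : ℕ} {f : EV n × ℝ → ℝ} (w p : EV n × ℝ) (hf : DifferentiableAt ℝ f p)
    (h0 : f p ≠ 0) :
    dd w (fun p => (f p)⁻¹) p = - dd w f p / (f p) ^ 2 := by
  unfold dd
  have h : fderiv ℝ (fun p => (f p)⁻¹) p = _ := ((hasDerivAt_inv h0).comp_hasFDerivAt p hf.hasFDerivAt).fderiv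
  rw [h]; simp; ring

theorem dd_const {n : ℕ} (c : ℝ) (w p : EV n × ℝ) : dd w (fun _ => c) p = 0 := by
  unfold dd; simp

theorem dd_sum {n : ℕ} {ι : Type} (s : Finset ι) {f : ι → EV n × ℝ → ℝ} (w p : EV n × ℝ)
    (hf : ∀ i, DifferentiableAt ℝ (f i) p) :
    dd w (fun p => ∑ i ∈ s, f i p) p = ∑ i ∈ s, dd w (f i) p := by
  unfold dd; rw [fderiv_fun_sum (fun i _ => hf i)]; simp

/-- heat operator -/
noncomputable def Hop {n : ℕ} (f : EV n × ℝ → ℝ) (p : EV n × ℝ) : ℝ :=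
  dd et f p - ∑ i, dd (ei i) (dd (ei i) f) p

theorem dd_coord {n : ℕ} (i : Fin n) (p : EV n × ℝ) : dd (ei i) (fun p => p.1 i) p = 1 := by
  unfold dd
  let L0 : EV n × ℝ →L[ℝ] ℝ := (EuclideanSpace.proj i).comp (ContinuousLinearMap.fst ℝ (EV n) ℝ)
  have : HasFDerivAt (fun p : EV n × ℝ => p.1 i) L0 p := L0.hasFDerivAt
  rw [this.fderiv]
  simp [L0, ei]

theorem coord_diff {n : ℕ} (i : Fin n) (p : EV n × ℝ) :
    DifferentiableAt ℝ (fun p : EV n × ℝ => p.1 i) p := by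
  let L0 : EV n × ℝ →L[ℝ] ℝ := (EuclideanSpace.proj i).comp (ContinuousLinearMap.fst ℝ (EV n) ℝ)
  exact L0.differentiableAt

theorem dd_time_inv {n : ℕ} (i : Fin n) (p : EV n × ℝ) (hp : 0 < p.2) :
    dd (ei i) (fun p => (2 * p.2)⁻¹) p = 0 := by
  rw [dd_inv _ _ (by fun_prop) (by positivity)]
  have : dd (ei i) (fun p : EV n × ℝ => 2 * p.2) p = 0 := by
    rw [dd_mul _ _ (by fun_prop) (by fun_prop), dd_const]
    simp [dd, ei, fderiv_snd]
  rw [this]; simp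

theorem hP_dii {n : ℕ} (f : EV n → ℝ) (hf : Continuous f) (hfs : HasCompactSupport f)
    (p : EV n × ℝ) (hp : 0 < p.2) (i : Fin n) :
    dd (ei i) (dd (ei i) (hP f)) p = (hP (fun z => z i * (z i * f z)) p
      - 2 * p.1 i * hP (fun z => z i * f z) p
      + p.1 i ^ 2 * hP f p) / (4 * p.2 ^ 2) - hP f p / (2 * p.2) := by
  have hf1 : Continuous (fun z : EV n => z i * f z) := by fun_prop
  have hfs1 : HasCompactSupport (fun z : EV n => z i * f z) := hfs.mul_left
  have s0 := (hP_smooth f hf hfs).diff hp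
  have s1 := (hP_smooth _ hf1 hfs1).diff hp
  rw [dd_congr (fun q hq => hP_di f hf hfs q hq i) _ p hp]
  simp only [div_eq_mul_inv]
  have c := coord_diff i p
  rw [dd_mul _ _ (s1.fun_sub (c.fun_mul s0)) (by
      apply DifferentiableAt.fun_inv (by fun_prop); positivity), dd_time_inv i p hp,
    dd_sub _ _ s1 (c.fun_mul s0), dd_mul _ _ c s0, hP_di f hf hfs p hp, hP_di _ hf1 hfs1 p hp, dd_coord]
  field_simp
  ring

theorem Hop_hP {n : ℕ} (f : EV n → ℝ) (hf : Continuous f) (hfs : HasCompactSupport f)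
    (p : EV n × ℝ) (hp : 0 < p.2) : Hop (hP f) p = 0 := by
  unfold Hop
  rw [hP_dt f hf hfs p hp]
  simp_rw [hP_dii f hf hfs p hp]
  simp

theorem Hop_quot {n : ℕ} (m u : EV n × ℝ → ℝ) (hm : Sm m) (hu : Sm u)
    (hu0 : ∀ p : EV n × ℝ, 0 < p.2 → 0 < u p) (p : EV n × ℝ) (hp : 0 < p.2)
    (h1 : Hop m p = 0) (h2 : Hop u p = 0) :
    Hop (fun p => m p * m p * (u p)⁻¹) p ≤ 0 := by
  have hi : Sm (fun p => (u p)⁻¹) := hu.inv fun p hp => (hu0 p hp).ne'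
  have first : ∀ w q, 0 < q.2 → dd w (fun p => m p * m p * (u p)⁻¹) q
      = 2 * (m q * dd w m q * (u q)⁻¹) - m q * m q * dd w u q * ((u q)⁻¹ * (u q)⁻¹) := by
    intro w q hq
    have := (hu0 q hq).ne'
    rw [dd_mul _ _ ((hm.mul hm).diff hq) (hi.diff hq), dd_mul _ _ (hm.diff hq) (hm.diff hq),
      dd_inv _ _ (hu.diff hq) this]
    field_simp
    ring
  have second : ∀ i, dd (ei i) (dd (ei i) (fun p => m p * m p * (u p)⁻¹)) p
      = 2 * m p / u p * dd (ei i) (dd (ei i) m) p - m p ^ 2 / u p ^ 2 * dd (ei i) (dd (ei i) u) p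
        + 2 / u p * (dd (ei i) m p - m p * dd (ei i) u p / u p) ^ 2 := by
    intro i
    rw [dd_congr (first (ei i)) _ p hp]
    have a1 := hm.mul (hm.dd (ei i))
    have a2 := a1.mul hi
    have a3 := (hm.mul hm).mul (hu.dd (ei i))
    have a4 := hi.mul hi
    have := (hu0 p hp).ne'
    rw [dd_sub _ _ (((Sm.const 2).mul a2).diff hp) ((a3.mul a4).diff hp),
      dd_mul _ _ ((Sm.const 2).diff hp) (a2.diff hp), dd_const, dd_mul _ _ (a1.diff hp) (hi.diff hp),
      dd_mul _ _ (hm.diff hp) ((hm.dd (ei i)).diff hp), dd_mul _ _ (a3.diff hp) (a4.diff hp),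
      dd_mul _ _ ((hm.mul hm).diff hp) ((hu.dd (ei i)).diff hp), dd_mul _ _ (hm.diff hp) (hm.diff hp),
      dd_mul _ _ (hi.diff hp) (hi.diff hp), dd_inv _ _ (hu.diff hp) this]
    field_simp
    ring
  unfold Hop at *
  rw [first et p hp]
  simp_rw [second]
  rw [Finset.sum_add_distrib, Finset.sum_sub_distrib, ← Finset.mul_sum, ← Finset.mul_sum]
  have hup := hu0 p hp
  have hs : 0 ≤ ∑ i, 2 / u p * (dd (ei i) m p - m p * dd (ei i) u p / u p) ^ 2 :=
    Finset.sum_nonneg fun i _ => by positivity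
  rw [sub_eq_zero] at h1 h2
  rw [← h1, ← h2]
  have : 2 * (m p * dd et m p * (u p)⁻¹) - m p * m p * dd et u p * ((u p)⁻¹ * (u p)⁻¹)
     = 2 * m p / u p * dd et m p - m p ^ 2 / u p ^ 2 * dd et u p := by field_simp
  linarith

theorem Hop_sub {n : ℕ} {f g : EV n × ℝ → ℝ} (hf : Sm f) (hg : Sm g) (p : EV n × ℝ) (hp : 0 < p.2) :
    Hop (fun p => f p - g p) p = Hop f p - Hop g p := by
  unfold Hop
  have : ∀ i, dd (ei i) (dd (ei i) (fun p => f p - g p)) p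
      = dd (ei i) (dd (ei i) f) p - dd (ei i) (dd (ei i) g) p := by
    intro i
    rw [dd_congr (fun q hq => dd_sub (ei i) q (hf.diff hq) (hg.diff hq)) _ p hp,
      dd_sub _ _ ((hf.dd _).diff hp) ((hg.dd _).diff hp)]
  simp_rw [this]
  rw [dd_sub _ _ (hf.diff hp) (hg.diff hp), Finset.sum_sub_distrib]
  ring

theorem Hop_sum {n : ℕ} {ι : Type} (s : Finset ι) {f : ι → EV n × ℝ → ℝ} (hf : ∀ i, Sm (f i))
    (p : EV n × ℝ) (hp : 0 < p.2) :
    Hop (fun p => ∑ i ∈ s, f i p) p = ∑ i ∈ s, Hop (f i) p := by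
  unfold Hop
  have : ∀ i, dd (ei i) (dd (ei i) (fun p => ∑ j ∈ s, f j p)) p
      = ∑ j ∈ s, dd (ei i) (dd (ei i) (f j)) p := by
    intro i
    rw [dd_congr (fun q hq => dd_sum s (ei i) q (fun j => (hf j).diff hq)) _ p hp,
      dd_sum s _ _ (fun j => ((hf j).dd _).diff hp)]
  simp_rw [this]
  rw [dd_sum s _ _ (fun j => (hf j).diff hp), Finset.sum_sub_distrib, Finset.sum_comm]

theorem Hop_cmul {n : ℕ} {f : EV n × ℝ → ℝ} (hf : Sm f) (c : ℝ) (p : EV n × ℝ) (hp : 0 < p.2) :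
    Hop (fun p => c * f p) p = c * Hop f p := by
  have first : ∀ w q, 0 < q.2 → dd w (fun p => c * f p) q = c * dd w f q := by
    intro w q hq
    rw [dd_mul _ _ ((Sm.const c).diff hq) (hf.diff hq), dd_const]; ring
  unfold Hop
  have : ∀ i, dd (ei i) (dd (ei i) (fun p => c * f p)) p = c * dd (ei i) (dd (ei i) f) p := by
    intro i
    rw [dd_congr (first (ei i)) _ p hp, dd_mul _ _ ((Sm.const c).diff hp) ((hf.dd _).diff hp), dd_const]; ring
  simp_rw [this]
  rw [first et p hp, ← Finset.mul_sum]; ring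

/-- the Li–Yau quantity as a variance -/
noncomputable def QF {n : ℕ} (f : EV n → ℝ) (p : EV n × ℝ) : ℝ :=
  (1 / 4) * ∑ j : Fin n, (hP (fun z => z j * (z j * f z)) p
    - hP (fun z => z j * f z) p * hP (fun z => z j * f z) p * (hP f p)⁻¹)

theorem hP_pos {n : ℕ} (f : EV n → ℝ) (hf : Continuous f) (hfs : HasCompactSupport f)
    (hnn : ∀ z, 0 ≤ f z) (hne : ∃ z, f z ≠ 0) (p : EV n × ℝ) (hp : 0 < p.2) : 0 < hP f p := by
  obtain ⟨z, hz⟩ := hne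
  have hk : ∀ z, 0 < heatK n p.1 z p.2 := fun z => by
    rw [heatK_eq _ _ _ _ hp]; exact Real.exp_pos _
  apply Continuous.integral_pos_of_hasCompactSupport_nonneg_nonzero (x := z)
  · exact (heatK_cont n p.1 p.2).mul hf
  · exact hfs.mul_left
  · exact fun z => mul_nonneg (hk z).le (hnn z)
  · exact mul_ne_zero (hk z).ne' hz

theorem QF_term {n : ℕ} (f : EV n → ℝ) (hf : Continuous f) (hfs : HasCompactSupport f)
    (hnn : ∀ z, 0 ≤ f z) (hne : ∃ z, f z ≠ 0) (j : Fin n) :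
    Sm (fun p => hP (fun z => z j * f z) p * hP (fun z => z j * f z) p * (hP f p)⁻¹) := by
  have h1 := hP_smooth (fun z => z j * f z) (by fun_prop) hfs.mul_left
  exact (h1.mul h1).mul ((hP_smooth f hf hfs).inv fun p hp => (hP_pos f hf hfs hnn hne p hp).ne')

theorem QF_smooth {n : ℕ} (f : EV n → ℝ) (hf : Continuous f) (hfs : HasCompactSupport f)
    (hnn : ∀ z, 0 ≤ f z) (hne : ∃ z, f z ≠ 0) : Sm (QF f) := by
  refine (Sm.const (1/4)).mul (Sm.sum _ fun j => ?_)
  exact (hP_smooth (fun z => z j * (z j * f z)) (by fun_prop) hfs.mul_left.mul_left).sub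
    (QF_term f hf hfs hnn hne j)

theorem QF_Hop {n : ℕ} (f : EV n → ℝ) (hf : Continuous f) (hfs : HasCompactSupport f)
    (hnn : ∀ z, 0 ≤ f z) (hne : ∃ z, f z ≠ 0) (p : EV n × ℝ) (hp : 0 < p.2) : 0 ≤ Hop (QF f) p := by
  have a := fun j => hP_smooth (fun z : EV n => z j * (z j * f z)) (by fun_prop) hfs.mul_left.mul_left
  have b := fun j => QF_term f hf hfs hnn hne j
  have h := Hop_cmul (Sm.sum Finset.univ (fun j => (a j).sub (b j))) (1/4) p hp
  have h' : Hop (QF f) p = _ := h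
  rw [h', Hop_sum _ (fun j => (a j).sub (b j)) p hp]
  refine mul_nonneg (by norm_num) (Finset.sum_nonneg fun j _ => ?_)
  rw [Hop_sub (a j) (b j) p hp, Hop_hP (fun z => z j * (z j * f z)) (by fun_prop) hfs.mul_left.mul_left p hp]
  have := Hop_quot (hP (fun z => z j * f z)) (hP f) (hP_smooth (fun z => z j * f z) (by fun_prop) hfs.mul_left)
    (hP_smooth f hf hfs) (hP_pos f hf hfs hnn hne) p hp (Hop_hP (fun z => z j * f z) (by fun_prop) hfs.mul_left p hp)
    (Hop_hP f hf hfs p hp)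
  linarith

theorem pdv_eq_dd {n : ℕ} (g : EV n × ℝ → ℝ) (y : EV n) (t : ℝ) (i : Fin n)
    (hg : DifferentiableAt ℝ g (y, t)) : pdv i (fun z => g (z, t)) y = dd (ei i) g (y, t) := by
  unfold pdv dd
  have h := hg.hasFDerivAt.comp y (hasFDerivAt_prodMk_left (𝕜 := ℝ) y t)
  have h' : fderiv ℝ (fun z => g (z, t)) y = _ := h.fderiv
  rw [h']; simp [ei]

theorem QF_eq {n : ℕ} (f : EV n → ℝ) (hf : Continuous f) (hfs : HasCompactSupport f)
    (hnn : ∀ z, 0 ≤ f z) (hne : ∃ z, f z ≠ 0) (y : EV n) (t : ℝ) (ht : 0 < t) :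
    t ^ 2 * hP f (y, t) * (lap (fun z => Real.log (hP f (z, t))) y + n / (2 * t)) = QF f (y, t) := by
  have hs := hP_smooth f hf hfs
  have hp := hP_pos f hf hfs hnn hne
  have hsi : Sm (fun p => (hP f p)⁻¹) := hs.inv fun p hp' => (hp p hp').ne'
  have first : ∀ i, pdv i (fun z => Real.log (hP f (z, t))) = fun z => (2 * t)⁻¹ *
      ((fun p : EV n × ℝ => hP (fun z => z i * f z) p * (hP f p)⁻¹ - p.1 i) (z, t)) := by
    intro i
    ext z
    have hl : DifferentiableAt ℝ (fun p : EV n × ℝ => Real.log (hP f p)) (z, t) :=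
      (hs.diff (p := (z,t)) ht).log (hp (z, t) ht).ne'
    rw [pdv_eq_dd (fun p => Real.log (hP f p)) z t i hl]
    unfold dd
    rw [fderiv.log (hs.diff (p := (z,t)) ht) (hp (z, t) ht).ne']
    have := hP_di f hf hfs (z, t) ht i
    unfold dd at this
    simp [this]
    have := (hp (z, t) ht).ne'
    field_simp
  have second : ∀ i, pdv i (pdv i (fun z => Real.log (hP f (z, t)))) y =
      (1 / (4 * t ^ 2)) * (hP f (y, t))⁻¹ * (hP (fun z => z i * (z i * f z)) (y, t)
    - hP (fun z => z i * f z) (y, t) * hP (fun z => z i * f z) (y, t) * (hP f (y, t))⁻¹) - 1 / (2 * t) := by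
    intro i
    have hm := hP_smooth (fun z : EV n => z i * f z) (by fun_prop) hfs.mul_left
    have c := coord_diff i (y, t)
    have hd : DifferentiableAt ℝ (fun p : EV n × ℝ => hP (fun z => z i * f z) p * (hP f p)⁻¹ - p.1 i) (y, t) :=
      ((hm.mul hsi).diff (p := (y, t)) ht).fun_sub c
    rw [first i]
    rw [pdv_eq_dd (fun q => (2 * t)⁻¹ * (fun p : EV n × ℝ => hP (fun z => z i * f z) p * (hP f p)⁻¹ - p.1 i) q) y t i
      ((differentiableAt_const _).fun_mul hd), dd_mul _ _ (differentiableAt_const _) hd, dd_const,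
      dd_sub _ _ ((hm.mul hsi).diff (p := (y, t)) ht) c, dd_mul _ _ (hm.diff (p := (y, t)) ht) (hsi.diff (p := (y, t)) ht),
      dd_inv _ _ (hs.diff (p := (y, t)) ht) (hp (y, t) ht).ne', dd_coord, hP_di f hf hfs (y, t) ht,
      hP_di (fun z => z i * f z) (by fun_prop) hfs.mul_left (y, t) ht]
    have := (hp (y, t) ht).ne'
    field_simp
    ring
  unfold lap QF
  simp_rw [second]
  rw [Finset.sum_sub_distrib, ← Finset.mul_sum]
  have := (hp (y, t) ht).ne'
  simp
  field_simp
  ring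

/-- log of backward heat kernel -/
noncomputable def gG {n : ℕ} (x₀ : EV n) (t₀ : ℝ) (p : EV n × ℝ) : ℝ := lphi n (p.1 - x₀, t₀ - p.2)

theorem gG_contDiffAt {n : ℕ} (x₀ : EV n) (t₀ : ℝ) (p : EV n × ℝ) (hp : p.2 < t₀) :
    ContDiffAt ℝ (⊤ : ℕ∞) (gG x₀ t₀) p := by
  exact ContDiffAt.comp (g := lphi n) (f := fun p : EV n × ℝ => (p.1 - x₀, t₀ - p.2)) p
    (lphi_contDiffAt n (p.1 - x₀, t₀ - p.2) (by simpa using hp)) (by fun_prop)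

theorem gG_diff {n : ℕ} (x₀ : EV n) (t₀ : ℝ) (p : EV n × ℝ) (hp : p.2 < t₀) :
    DifferentiableAt ℝ (gG x₀ t₀) p := (gG_contDiffAt x₀ t₀ p hp).differentiableAt (by simp)

theorem gG_fderiv {n : ℕ} (x₀ : EV n) (t₀ : ℝ) (p : EV n × ℝ) (hp : p.2 < t₀) (w : EV n × ℝ) :
    dd w (gG x₀ t₀) p = (((n:ℝ) / 2) / (t₀ - p.2) - ‖p.1 - x₀‖ ^ 2 / (4 * (t₀ - p.2) ^ 2)) * w.2
      - inner ℝ (p.1 - x₀) w.1 / (2 * (t₀ - p.2)) := by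
  have hp' : 0 < t₀ - p.2 := by linarith
  have hl : HasFDerivAt (lphi n) (fderiv ℝ (lphi n) (p.1 - x₀, t₀ - p.2)) (p.1 - x₀, t₀ - p.2) :=
    ((lphi_contDiffAt n (p.1 - x₀, t₀ - p.2) hp').differentiableAt (by simp)).hasFDerivAt
  let L0 : EV n × ℝ →L[ℝ] EV n × ℝ :=
    ContinuousLinearMap.prod (ContinuousLinearMap.fst ℝ (EV n) ℝ) (-ContinuousLinearMap.snd ℝ (EV n) ℝ)
  have hin : HasFDerivAt (fun p : EV n × ℝ => (p.1 - x₀, t₀ - p.2)) L0 p := by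
    exact (hasFDerivAt_fst.sub_const x₀).prodMk (hasFDerivAt_snd.const_sub t₀)
  have h : fderiv ℝ (gG x₀ t₀) p = _ := (HasFDerivAt.comp p (g := lphi n) hl hin).fderiv
  unfold dd
  rw [h]
  simp [L0, lphi_fderiv n (p.1 - x₀, t₀ - p.2) hp']
  ring

theorem gG_di {n : ℕ} (x₀ : EV n) (t₀ : ℝ) (p : EV n × ℝ) (hp : p.2 < t₀) (i : Fin n) :
    dd (ei i) (gG x₀ t₀) p = -((p.1 i - x₀ i) / (2 * (t₀ - p.2))) := by
  rw [gG_fderiv x₀ t₀ p hp]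
  simp [ei, EuclideanSpace.inner_single_right]

theorem gG_dt {n : ℕ} (x₀ : EV n) (t₀ : ℝ) (p : EV n × ℝ) (hp : p.2 < t₀) :
    dd et (gG x₀ t₀) p = ((n:ℝ) / 2) / (t₀ - p.2) - ‖p.1 - x₀‖ ^ 2 / (4 * (t₀ - p.2) ^ 2) := by
  rw [gG_fderiv x₀ t₀ p hp]
  simp [et]

theorem ly_isOpen_lt (n : ℕ) (t₀ : ℝ) : IsOpen {p : EV n × ℝ | p.2 < t₀} :=
  _root_.isOpen_lt continuous_snd continuous_const

theorem gG_dii {n : ℕ} (x₀ : EV n) (t₀ : ℝ) (p : EV n × ℝ) (hp : p.2 < t₀) (i : Fin n) :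
    dd (ei i) (dd (ei i) (gG x₀ t₀)) p = -(1 / (2 * (t₀ - p.2))) := by
  have : dd (ei i) (gG x₀ t₀) =ᶠ[nhds p] fun p => (p.1 i - x₀ i) * (-(2 * (t₀ - p.2)))⁻¹ := by
    filter_upwards [(ly_isOpen_lt n t₀).mem_nhds hp] with q hq
    rw [gG_di x₀ t₀ q hq, inv_neg]
    ring
  have hp' : t₀ - p.2 ≠ 0 := by have : p.2 < t₀ := hp; linarith
  have e : dd (ei i) (dd (ei i) (gG x₀ t₀)) p = dd (ei i) (fun p => (p.1 i - x₀ i) * (-(2 * (t₀ - p.2)))⁻¹) p := by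
    unfold dd at *; rw [this.fderiv_eq]
  have c := coord_diff i p
  have d1 : DifferentiableAt ℝ (fun p : EV n × ℝ => -(2 * (t₀ - p.2))) p := by fun_prop
  have d2 : -(2 * (t₀ - p.2)) ≠ 0 := by simpa using hp'
  rw [e, dd_mul _ _ (c.fun_sub (differentiableAt_const _)) (d1.fun_inv d2),
    dd_sub _ _ c (differentiableAt_const _), dd_coord, dd_const, dd_inv _ _ d1 d2]
  have : dd (ei i) (fun p : EV n × ℝ => -(2 * (t₀ - p.2))) p = 0 := by
    unfold dd
    have h : HasFDerivAt (fun p : EV n × ℝ => -(2 * (t₀ - p.2))) (-((2:ℝ) • (-ContinuousLinearMap.snd ℝ (EV n) ℝ))) p :=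
      ((hasFDerivAt_snd.const_sub t₀).const_mul 2).fun_neg
    rw [h.fderiv]; simp [ei]
  rw [this]
  field_simp
  ring

/-- smooth weight -/
noncomputable def om (l g : ℝ) : ℝ := Real.exp g - Real.exp l - Real.exp l * (g - l)

/-- truncated weight -/
noncomputable def wl (l g : ℝ) : ℝ := if l ≤ g then om l g else 0

/-- derivative of truncated weight -/
noncomputable def wl' (l g : ℝ) : ℝ := if l ≤ g then Real.exp g - Real.exp l else 0

theorem om_hasDerivAt (l g : ℝ) : HasDerivAt (om l) (Real.exp g - Real.exp l) g := by
  have h := ((Real.hasDerivAt_exp g).sub_const (Real.exp l)).sub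
    (((hasDerivAt_id g).sub_const l).const_mul (Real.exp l))
  rw [mul_one] at h
  exact h

theorem om_self (l : ℝ) : om l l = 0 := by simp [om]

theorem wl'_cont (l : ℝ) : Continuous (wl' l) := by
  have : wl' l = fun g => Real.exp (max g l) - Real.exp l := by
    ext g; unfold wl'
    split_ifs with h
    · rw [max_eq_left h]
    · rw [max_eq_right (by linarith)]; simp
  rw [this]; fun_prop

theorem wl_cont (l : ℝ) : Continuous (wl l) := by
  have : wl l = fun g => om l (max g l) := by
    ext g; unfold wl
    split_ifs with h
    · rw [max_eq_left h]
    · rw [max_eq_right (by linarith), om_self]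
  rw [this]; unfold om; fun_prop

theorem wl_hasDerivAt (l g : ℝ) : HasDerivAt (wl l) (wl' l g) g := by
  rcases lt_trichotomy g l with h | h | h
  · have e : wl l =ᶠ[nhds g] fun _ => 0 := by
      filter_upwards [gt_mem_nhds h] with x hx
      simp [wl, not_le.2 hx]
    rw [show wl' l g = 0 by simp [wl', not_le.2 h]]
    exact (hasDerivAt_const g (0:ℝ)).congr_of_eventuallyEq e
  · subst h
    rw [show wl' g g = 0 by simp [wl']]
    have h1 : HasDerivWithinAt (wl g) 0 (Iic g) g := by
      refine (hasDerivWithinAt_const g (Iic g) (0:ℝ)).congr ?_ ?_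
      · intro x hx
        rcases eq_or_lt_of_le (show x ≤ g from hx) with h | h
        · simp [h, wl, om]
        · simp [wl, not_le.2 h]
      · simp [wl, om]
    have h2 : HasDerivWithinAt (wl g) 0 (Ici g) g := by
      have := (om_hasDerivAt g g).hasDerivWithinAt (s := Ici g)
      rw [sub_self] at this
      refine this.congr ?_ ?_
      · intro x hx; simp [wl, show g ≤ x from hx]
      · simp [wl]
    have := h1.union h2
    rw [Iic_union_Ici] at this
    exact hasDerivWithinAt_univ.1 this
  · have e : wl l =ᶠ[nhds g] om l := by
      filter_upwards [lt_mem_nhds h] with x hx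
      simp [wl, hx.le]
    rw [show wl' l g = Real.exp g - Real.exp l by simp [wl', h.le]]
    exact (om_hasDerivAt l g).congr_of_eventuallyEq e

theorem om_nonneg (l g : ℝ) : 0 ≤ om l g := by
  have h := Real.add_one_le_exp (g - l)
  have : Real.exp g = Real.exp l * Real.exp (g - l) := by rw [← Real.exp_add]; ring_nf
  unfold om; rw [this]
  nlinarith [Real.exp_pos l]

theorem wl_nonneg (l g : ℝ) : 0 ≤ wl l g := by
  unfold wl; split_ifs; exacts [om_nonneg l g, le_rfl]

theorem wl_le (l g : ℝ) : wl l g ≤ Real.exp g := by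
  unfold wl; split_ifs with h
  · unfold om; nlinarith [Real.exp_pos l]
  · positivity

theorem wl_anti {l₁ l₂ : ℝ} (h : l₁ ≤ l₂) (g : ℝ) : wl l₂ g ≤ wl l₁ g := by
  by_cases h2 : l₂ ≤ g
  · have h1 : l₁ ≤ g := h.trans h2
    simp only [wl, h1, h2, if_true, om]
    have e := Real.add_one_le_exp (l₁ - l₂)
    have : Real.exp l₁ = Real.exp l₂ * Real.exp (l₁ - l₂) := by rw [← Real.exp_add]; ring_nf
    have hle : Real.exp l₁ ≤ Real.exp l₂ := Real.exp_le_exp.2 h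
    have hneg : Real.exp l₂ * (1 + (l₁ - l₂)) ≤ Real.exp l₁ := by
      rw [this]; nlinarith [Real.exp_pos l₂]
    have e' := Real.add_one_le_exp (l₂ - l₁)
    have this' : Real.exp l₂ = Real.exp l₁ * Real.exp (l₂ - l₁) := by rw [← Real.exp_add]; ring_nf
    have h3 : Real.exp l₁ * (1 + (l₂ - l₁)) ≤ Real.exp l₂ := by
      rw [this']; nlinarith [Real.exp_pos l₁]
    nlinarith [mul_nonneg (sub_nonneg.2 hle) (sub_nonneg.2 h2)]
  · simp only [wl, h2, if_false]; exact wl_nonneg l₁ g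

/-- truncated heat ball -/
def Er {n : ℕ} (x₀ : EV n) (t₀ l T : ℝ) : Set (EV n × ℝ) := {p | 0 < p.2 ∧ p.2 ≤ T ∧ l ≤ gG x₀ t₀ p}

theorem Er_compact {n : ℕ} (x₀ : EV n) (t₀ l T t₁ ρ : ℝ) (ht₁ : 0 < t₁) (hT : T < t₀)
    (hE : ∀ p : EV n × ℝ, p.2 < t₀ → l ≤ gG x₀ t₀ p → t₁ < p.2 ∧ ‖p.1 - x₀‖ ≤ ρ) :
    IsCompact (Er x₀ t₀ l T) := by
  have e : Er x₀ t₀ l T = (Metric.closedBall x₀ ρ ×ˢ Icc t₁ T) ∩ gG x₀ t₀ ⁻¹' (Ici l) := by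
    ext p
    constructor
    · rintro ⟨h0, h1, h2⟩
      have := hE p (by linarith) h2
      exact ⟨⟨by simpa [dist_eq_norm] using this.2, this.1.le, h1⟩, h2⟩
    · rintro ⟨⟨_, h1, h2⟩, h3⟩
      exact ⟨lt_of_lt_of_le ht₁ h1, h2, h3⟩
  have hK : IsCompact (Metric.closedBall x₀ ρ ×ˢ Icc t₁ T) := (isCompact_closedBall _ _).prod isCompact_Icc
  have hc : ContinuousOn (gG x₀ t₀) (Metric.closedBall x₀ ρ ×ˢ Icc t₁ T) := fun p hp =>
    (gG_contDiffAt x₀ t₀ p (lt_of_le_of_lt hp.2.2 hT)).continuousAt.continuousWithinAt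
  rw [e]
  exact hK.of_isClosed_subset (hc.preimage_isClosed_of_isClosed hK.isClosed isClosed_Ici) inter_subset_left

theorem Er_slice {n : ℕ} (x₀ : EV n) (t₀ l t : ℝ) (ht : t < t₀) :
    ∃ R : ℝ, {y : EV n | l ≤ gG x₀ t₀ (y, t)} = Metric.closedBall x₀ R ∧
      ∀ y ∈ Metric.sphere x₀ R, gG x₀ t₀ (y, t) = l := by
  set D := 4 * (t₀ - t) * (-((n:ℝ)/2) * Real.log (4 * π * (t₀ - t)) - l) with hD
  have hτ : 0 < t₀ - t := by linarith
  have h1 : ∀ y : EV n, gG x₀ t₀ (y, t) - l = (D - ‖y - x₀‖ ^ 2) / (4 * (t₀ - t)) := by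
    intro y; unfold gG lphi; simp only; rw [hD]; field_simp; ring
  by_cases hD0 : D < 0
  · refine ⟨-1, ?_, ?_⟩
    · ext y
      have : (D - ‖y - x₀‖ ^ 2) / (4 * (t₀ - t)) < 0 :=
        div_neg_of_neg_of_pos (by nlinarith [sq_nonneg ‖y - x₀‖]) (by positivity)
      have h3 : ¬ (l ≤ gG x₀ t₀ (y, t)) := by have := h1 y; linarith
      have h4 : ¬ (dist y x₀ ≤ -1) := by linarith [dist_nonneg (x := y) (y := x₀)]
      simp [h3, h4]
    · intro y hy
      have : dist y x₀ = -1 := hy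
      linarith [dist_nonneg (x := y) (y := x₀)]
  · push Not at hD0
    refine ⟨Real.sqrt D, ?_, ?_⟩
    · ext y
      have h2 : l ≤ gG x₀ t₀ (y, t) ↔ 0 ≤ D - ‖y - x₀‖ ^ 2 := by
        rw [← sub_nonneg, h1 y, le_div_iff₀ (by positivity)]; simp
      simp only [mem_setOf_eq, Metric.mem_closedBall, dist_eq_norm]
      rw [h2, Real.le_sqrt (norm_nonneg _) hD0, sub_nonneg]
    · intro y hy
      have : ‖y - x₀‖ = Real.sqrt D := by rw [← dist_eq_norm]; exact hy
      have h2 := h1 y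
      rw [this, Real.sq_sqrt hD0] at h2
      simp at h2; linarith

theorem keyB {n : ℕ} [Nontrivial (EV n)] (x₀ : EV n) (t₀ l T t₁ ρ : ℝ) (ht₁ : 0 < t₁) (hT : T < t₀)
    (hE : ∀ p : EV n × ℝ, p.2 < t₀ → l ≤ gG x₀ t₀ p → t₁ < p.2 ∧ ‖p.1 - x₀‖ ≤ ρ)
    (X : EV n × ℝ → ℝ) (hX : ∀ p : EV n × ℝ, 0 < p.2 → p.2 < t₀ → ContDiffAt ℝ (⊤ : ℕ∞) X p)
    (h0 : ∀ p : EV n × ℝ, 0 < p.2 → p.2 < t₀ → gG x₀ t₀ p = l → X p = 0) (i : Fin n) :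
    IntegrableOn (dd (ei i) X) (Er x₀ t₀ l T) ∧ ∫ p in Er x₀ t₀ l T, dd (ei i) X p = 0 := by
  have hK := Er_compact x₀ t₀ l T t₁ ρ ht₁ hT hE
  have hc : ContinuousOn (dd (ei i) X) (Er x₀ t₀ l T) := by
    intro p hp
    have h1 : ContDiffAt ℝ (⊤ : ℕ∞) (fderiv ℝ X) p :=
      (hX p hp.1 (lt_of_le_of_lt hp.2.1 hT)).fderiv_right (by simp)
    exact (h1.clm_apply contDiffAt_const).continuousAt.continuousWithinAt
  have hint : IntegrableOn (dd (ei i) X) (Er x₀ t₀ l T) := hc.integrableOn_compact hK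
  refine ⟨hint, ?_⟩
  rw [← integral_indicator hK.measurableSet]
  have hint' := (integrable_indicator_iff hK.measurableSet).2 hint
  rw [Measure.volume_eq_prod] at hint' ⊢
  rw [integral_prod_symm _ hint']
  apply integral_eq_zero_of_ae
  refine Eventually.of_forall fun t => ?_
  simp only [Pi.zero_apply]
  by_cases ht : 0 < t ∧ t ≤ T
  · have htt : t < t₀ := lt_of_le_of_lt ht.2 hT
    obtain ⟨R, hR, hS⟩ := Er_slice x₀ t₀ l t htt
    have hXt : ContDiff ℝ 1 (fun y => X (y, t)) := by
      rw [contDiff_iff_contDiffAt]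
      intro y
      exact ((hX (y, t) ht.1 htt).of_le (by exact_mod_cast le_top)).comp (f := fun y : EV n => (y, t)) y (by fun_prop)
    rw [← ly_ball_div (fun y => X (y, t)) hXt x₀ R
      (fun y hy => h0 (y, t) ht.1 htt (hS y hy)) (EuclideanSpace.single i 1),
      ← integral_indicator Metric.isClosed_closedBall.measurableSet, ← hR]
    congr 1
    ext y
    by_cases hy : l ≤ gG x₀ t₀ (y, t)
    · rw [indicator_of_mem (show (y, t) ∈ Er x₀ t₀ l T from ⟨ht.1, ht.2, hy⟩), indicator_of_mem (by exact hy)]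
      exact (pdv_eq_dd X y t i ((hX (y, t) ht.1 htt).differentiableAt (by simp))).symm
    · rw [indicator_of_notMem (fun h => hy h.2.2), indicator_of_notMem (by exact hy)]
  · apply integral_eq_zero_of_ae
    refine Eventually.of_forall fun y => ?_
    exact indicator_of_notMem (fun h => ht ⟨h.1, h.2.1⟩) _

theorem keyA {n : ℕ} (x₀ : EV n) (t₀ l T t₁ ρ : ℝ) (ht₁ : 0 < t₁) (hT : T < t₀) (h1T : t₁ ≤ T)
    (hE : ∀ p : EV n × ℝ, p.2 < t₀ → l ≤ gG x₀ t₀ p → t₁ < p.2 ∧ ‖p.1 - x₀‖ ≤ ρ)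
    (F : EV n × ℝ → ℝ) (hF : Sm F) :
    ∫ p in Er x₀ t₀ l T, (wl' l (gG x₀ t₀ p) * dd et (gG x₀ t₀) p * F p + wl l (gG x₀ t₀ p) * dd et F p)
      = ∫ y, wl l (gG x₀ t₀ (y, T)) * F (y, T) := by
  have hK := Er_compact x₀ t₀ l T t₁ ρ ht₁ hT hE
  set h := fun p : EV n × ℝ => wl' l (gG x₀ t₀ p) * dd et (gG x₀ t₀) p * F p + wl l (gG x₀ t₀ p) * dd et F p with hh
  have hca : ∀ p : EV n × ℝ, 0 < p.2 → p.2 < t₀ → ContinuousAt h p := by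
    intro p h0 h1
    have g1 := gG_contDiffAt x₀ t₀ p h1
    have g2 : ContinuousAt (dd et (gG x₀ t₀)) p := by
      have h1 : ContDiffAt ℝ (⊤ : ℕ∞) (fderiv ℝ (gG x₀ t₀)) p := g1.fderiv_right (by simp)
      exact (h1.clm_apply contDiffAt_const).continuousAt
    have g3 := (hF p h0).continuousAt
    have g4 := (hF.dd et p h0).continuousAt
    have g5 : ContinuousAt (fun p => wl' l (gG x₀ t₀ p)) p := (wl'_cont l).continuousAt.comp g1.continuousAt
    have g6 : ContinuousAt (fun p => wl l (gG x₀ t₀ p)) p := (wl_cont l).continuousAt.comp g1.continuousAt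
    exact ((g5.mul g2).mul g3).add (g6.mul g4)
  have hc : ContinuousOn h (Er x₀ t₀ l T) := fun p hp =>
    (hca p hp.1 (lt_of_le_of_lt hp.2.1 hT)).continuousWithinAt
  have hint : IntegrableOn h (Er x₀ t₀ l T) := hc.integrableOn_compact hK
  have hsub : Er x₀ t₀ l T ⊆ univ ×ˢ Ioc t₁ T := fun p hp =>
    ⟨mem_univ _, (hE p (lt_of_le_of_lt hp.2.1 hT) hp.2.2).1, hp.2.1⟩
  have hz : ∀ p ∈ (univ ×ˢ Ioc t₁ T) \ Er x₀ t₀ l T, h p = 0 := by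
    intro p hp
    have : ¬ l ≤ gG x₀ t₀ p := fun hl => hp.2 ⟨ht₁.trans hp.1.2.1, hp.1.2.2, hl⟩
    simp [hh, wl, wl', this]
  have hms : MeasurableSet ((univ : Set (EV n)) ×ˢ Ioc t₁ T) := MeasurableSet.univ.prod measurableSet_Ioc
  have hint2 : IntegrableOn h (univ ×ˢ Ioc t₁ T) := hint.of_forall_diff_eq_zero hms hz
  rw [← setIntegral_eq_of_subset_of_forall_diff_eq_zero hms hsub hz]
  rw [Measure.volume_eq_prod] at hint2 ⊢
  rw [setIntegral_prod _ hint2, setIntegral_univ]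
  congr 1
  ext y
  rw [← intervalIntegral.integral_of_le h1T]
  have hder : ∀ t ∈ uIcc t₁ T, HasDerivAt (fun t => wl l (gG x₀ t₀ (y, t)) * F (y, t)) (h (y, t)) t := by
    intro t ht
    rw [uIcc_of_le h1T] at ht
    have ht0 : 0 < t := lt_of_lt_of_le ht₁ ht.1
    have htt : t < t₀ := lt_of_le_of_lt ht.2 hT
    have line : HasDerivAt (fun t : ℝ => (y, t)) ((0 : EV n), (1:ℝ)) t :=
      (hasDerivAt_const t y).prodMk (hasDerivAt_id t)
    have hG : HasDerivAt (fun t => gG x₀ t₀ (y, t)) (dd et (gG x₀ t₀) (y, t)) t :=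
      (gG_diff x₀ t₀ (y, t) htt).hasFDerivAt.comp_hasDerivAt t line
    have hF' : HasDerivAt (fun t => F (y, t)) (dd et F (y, t)) t :=
      (hF.diff (p := (y, t)) ht0).hasFDerivAt.comp_hasDerivAt t line
    exact ((wl_hasDerivAt l (gG x₀ t₀ (y, t))).comp t hG).mul hF'
  rw [intervalIntegral.integral_eq_sub_of_hasDerivAt hder]
  · have : ¬ l ≤ gG x₀ t₀ (y, t₁) := fun hl => lt_irrefl _ (hE (y, t₁) (lt_of_le_of_lt h1T hT) hl).1
    simp [wl, this]
  · apply ContinuousOn.intervalIntegrable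
    intro t ht
    rw [uIcc_of_le h1T] at ht
    have := hca (y, t) (lt_of_lt_of_le ht₁ ht.1) (lt_of_le_of_lt ht.2 hT)
    exact (ContinuousAt.comp (f := fun t : ℝ => (y, t)) this (by fun_prop)).continuousWithinAt

theorem om_gG_diff {n : ℕ} (x₀ : EV n) (t₀ l : ℝ) (p : EV n × ℝ) (hp : p.2 < t₀) (w : EV n × ℝ) :
    DifferentiableAt ℝ (fun p => om l (gG x₀ t₀ p)) p ∧
    dd w (fun p => om l (gG x₀ t₀ p)) p = (Real.exp (gG x₀ t₀ p) - Real.exp l) * dd w (gG x₀ t₀) p := by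
  have h : HasFDerivAt (fun p => om l (gG x₀ t₀ p)) _ p :=
    (om_hasDerivAt l (gG x₀ t₀ p)).comp_hasFDerivAt p (gG_diff x₀ t₀ p hp).hasFDerivAt
  refine ⟨h.differentiableAt, ?_⟩
  unfold dd; rw [h.fderiv]; simp

theorem exp_gG_diff {n : ℕ} (x₀ : EV n) (t₀ l : ℝ) (p : EV n × ℝ) (hp : p.2 < t₀) (w : EV n × ℝ) :
    DifferentiableAt ℝ (fun p => Real.exp (gG x₀ t₀ p) - Real.exp l) p ∧
    dd w (fun p => Real.exp (gG x₀ t₀ p) - Real.exp l) p = Real.exp (gG x₀ t₀ p) * dd w (gG x₀ t₀) p := by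
  have h : HasFDerivAt (fun p => Real.exp (gG x₀ t₀ p) - Real.exp l) _ p :=
    ((gG_diff x₀ t₀ p hp).hasFDerivAt.exp).sub_const _
  refine ⟨h.differentiableAt, ?_⟩
  unfold dd; rw [h.fderiv]; simp

/-- the vector field -/
noncomputable def vX {n : ℕ} (x₀ : EV n) (t₀ l : ℝ) (F : EV n × ℝ → ℝ) (i : Fin n) (p : EV n × ℝ) : ℝ :=
  om l (gG x₀ t₀ p) * dd (ei i) F p
    - F p * ((Real.exp (gG x₀ t₀ p) - Real.exp l) * dd (ei i) (gG x₀ t₀) p)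

theorem ddG_smooth {n : ℕ} (x₀ : EV n) (t₀ : ℝ) (p : EV n × ℝ) (hp : p.2 < t₀) (w : EV n × ℝ) :
    ContDiffAt ℝ (⊤ : ℕ∞) (dd w (gG x₀ t₀)) p := by
  have h1 : ContDiffAt ℝ (⊤ : ℕ∞) (fderiv ℝ (gG x₀ t₀)) p := (gG_contDiffAt x₀ t₀ p hp).fderiv_right (by simp)
  exact h1.clm_apply contDiffAt_const

theorem vX_smooth {n : ℕ} (x₀ : EV n) (t₀ l : ℝ) (F : EV n × ℝ → ℝ) (hF : Sm F) (i : Fin n) (p : EV n × ℝ)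
    (h0 : 0 < p.2) (h1 : p.2 < t₀) : ContDiffAt ℝ (⊤ : ℕ∞) (vX x₀ t₀ l F i) p := by
  have g := gG_contDiffAt x₀ t₀ p h1
  have a := hF p h0
  have b := hF.dd (ei i) p h0
  have c := ddG_smooth x₀ t₀ p h1 (ei i)
  unfold vX om
  exact ((((g.exp.sub contDiffAt_const).sub (contDiffAt_const.mul (g.sub contDiffAt_const)))).mul b).sub
    (a.mul ((g.exp.sub contDiffAt_const).mul c))

theorem vX_dd {n : ℕ} (x₀ : EV n) (t₀ l : ℝ) (F : EV n × ℝ → ℝ) (hF : Sm F) (i : Fin n) (p : EV n × ℝ)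
    (h0 : 0 < p.2) (h1 : p.2 < t₀) : dd (ei i) (vX x₀ t₀ l F i) p =
      om l (gG x₀ t₀ p) * dd (ei i) (dd (ei i) F) p
      - F p * (Real.exp (gG x₀ t₀ p) * dd (ei i) (gG x₀ t₀) p ^ 2
        + (Real.exp (gG x₀ t₀ p) - Real.exp l) * dd (ei i) (dd (ei i) (gG x₀ t₀)) p) := by
  obtain ⟨o1, o2⟩ := om_gG_diff x₀ t₀ l p h1 (ei i)
  obtain ⟨e1, e2⟩ := exp_gG_diff x₀ t₀ l p h1 (ei i)
  have a := hF.diff h0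
  have b := (hF.dd (ei i)).diff h0
  have c : DifferentiableAt ℝ (dd (ei i) (gG x₀ t₀)) p := (ddG_smooth x₀ t₀ p h1 (ei i)).differentiableAt (by simp)
  unfold vX
  rw [dd_sub _ _ (o1.fun_mul b) (a.fun_mul (e1.fun_mul c)), dd_mul _ _ o1 b, dd_mul _ _ a (e1.fun_mul c),
    dd_mul _ _ e1 c, o2, e2]
  ring

theorem key_pt {n : ℕ} (x₀ : EV n) (t₀ l : ℝ) (F : EV n × ℝ → ℝ) (hF : Sm F) (p : EV n × ℝ)
    (h0 : 0 < p.2) (h1 : p.2 < t₀) (hl : l ≤ gG x₀ t₀ p) :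
    (wl' l (gG x₀ t₀ p) * dd et (gG x₀ t₀) p * F p + wl l (gG x₀ t₀ p) * dd et F p)
      - ∑ i, dd (ei i) (vX x₀ t₀ l F i) p
    = Real.exp l * (‖p.1 - x₀‖ ^ 2 / (4 * (t₀ - p.2) ^ 2) * F p) + wl l (gG x₀ t₀ p) * Hop F p := by
  have hτ : t₀ - p.2 ≠ 0 := by linarith
  simp only [vX_dd x₀ t₀ l F hF _ p h0 h1, gG_dt x₀ t₀ p h1, gG_dii x₀ t₀ p h1]
  have hS : ∑ i, dd (ei i) (gG x₀ t₀) p ^ 2 = ‖p.1 - x₀‖ ^ 2 / (4 * (t₀ - p.2) ^ 2) := by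
    rw [EuclideanSpace.norm_sq_eq, Finset.sum_div]
    refine Finset.sum_congr rfl fun i _ => ?_
    rw [gG_di x₀ t₀ p h1]
    simp only [PiLp.sub_apply, Real.norm_eq_abs, sq_abs]
    field_simp; ring
  rw [Finset.sum_sub_distrib, ← Finset.mul_sum, ← Finset.mul_sum, Finset.sum_add_distrib, ← Finset.mul_sum, hS]
  simp only [wl, wl', hl, if_true, Hop, Finset.sum_const, Finset.card_univ, Fintype.card_fin, nsmul_eq_mul]
  field_simp
  ring

theorem key_id {n : ℕ} [Nontrivial (EV n)] (x₀ : EV n) (t₀ l T t₁ ρ : ℝ) (ht₁ : 0 < t₁) (hT : T < t₀) (h1T : t₁ ≤ T)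
    (hE : ∀ p : EV n × ℝ, p.2 < t₀ → l ≤ gG x₀ t₀ p → t₁ < p.2 ∧ ‖p.1 - x₀‖ ≤ ρ)
    (F : EV n × ℝ → ℝ) (hF : Sm F) :
    IntegrableOn (fun p => ‖p.1 - x₀‖ ^ 2 / (4 * (t₀ - p.2) ^ 2) * F p) (Er x₀ t₀ l T) ∧
    IntegrableOn (fun p => wl l (gG x₀ t₀ p) * Hop F p) (Er x₀ t₀ l T) ∧
    ∫ y, wl l (gG x₀ t₀ (y, T)) * F (y, T) =
      Real.exp l * (∫ p in Er x₀ t₀ l T, ‖p.1 - x₀‖ ^ 2 / (4 * (t₀ - p.2) ^ 2) * F p)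
      + ∫ p in Er x₀ t₀ l T, wl l (gG x₀ t₀ p) * Hop F p := by
  have hK := Er_compact x₀ t₀ l T t₁ ρ ht₁ hT hE
  have hm : MeasurableSet (Er x₀ t₀ l T) := hK.isClosed.measurableSet
  have gc : ∀ p ∈ Er x₀ t₀ l T, ContinuousAt (gG x₀ t₀) p := fun p hp =>
    (gG_contDiffAt x₀ t₀ p (lt_of_le_of_lt hp.2.1 hT)).continuousAt
  have i1 : IntegrableOn (fun p => ‖p.1 - x₀‖ ^ 2 / (4 * (t₀ - p.2) ^ 2) * F p) (Er x₀ t₀ l T) := by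
    refine ContinuousOn.integrableOn_compact hK (fun p hp => ContinuousAt.continuousWithinAt ?_)
    have hτ : t₀ - p.2 ≠ 0 := by have := hp.2.1; linarith
    have := (hF p hp.1).continuousAt
    refine ContinuousAt.mul (ContinuousAt.div (by fun_prop) (by fun_prop) (by simpa using hτ)) this
  have i2 : IntegrableOn (fun p => wl l (gG x₀ t₀ p) * Hop F p) (Er x₀ t₀ l T) := by
    refine ContinuousOn.integrableOn_compact hK (fun p hp => ContinuousAt.continuousWithinAt ?_)
    refine ContinuousAt.mul ((wl_cont l).continuousAt.comp (gc p hp)) ?_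
    have hs : Sm (Hop F) := (hF.dd et).sub (Sm.sum Finset.univ fun i => (hF.dd (ei i)).dd (ei i))
    exact (hs p hp.1).continuousAt
  have i3 : IntegrableOn (fun p => wl' l (gG x₀ t₀ p) * dd et (gG x₀ t₀) p * F p + wl l (gG x₀ t₀ p) * dd et F p) (Er x₀ t₀ l T) := by
    refine ContinuousOn.integrableOn_compact hK (fun p hp => ContinuousAt.continuousWithinAt ?_)
    have a := (hF p hp.1).continuousAt
    have b := (hF.dd et p hp.1).continuousAt
    have c := (ddG_smooth x₀ t₀ p (lt_of_le_of_lt hp.2.1 hT) et).continuousAt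
    exact ((((wl'_cont l).continuousAt.comp (gc p hp)).mul c).mul a).add
      (((wl_cont l).continuousAt.comp (gc p hp)).mul b)
  have kb := fun i => keyB x₀ t₀ l T t₁ ρ ht₁ hT hE (vX x₀ t₀ l F i) (vX_smooth x₀ t₀ l F hF i)
    (fun p _ _ h => by simp [vX, h, om_self]) i
  refine ⟨i1, i2, ?_⟩
  rw [← keyA x₀ t₀ l T t₁ ρ ht₁ hT h1T hE F hF, ← integral_const_mul, ← integral_add (i1.const_mul _) i2]
  have : ∫ p in Er x₀ t₀ l T, ∑ i, dd (ei i) (vX x₀ t₀ l F i) p = 0 := by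
    rw [integral_finsetSum _ fun i _ => (kb i).1]
    exact Finset.sum_eq_zero fun i _ => (kb i).2
  rw [← sub_zero (integral _ _), ← this, ← integral_sub i3 (integrable_finsetSum _ fun i _ => (kb i).1)]
  exact setIntegral_congr_fun hm fun p hp => key_pt x₀ t₀ l F hF p hp.1 (lt_of_le_of_lt hp.2.1 hT) hp.2.2

theorem hE_ok {n : ℕ} (hn : 1 ≤ n) (x₀ : EV n) (t₀ r : ℝ) (hr : 0 < r) (p : EV n × ℝ) (hp : p.2 < t₀)
    (h : -(n * Real.log r) ≤ gG x₀ t₀ p) :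
    t₀ - r ^ 2 / (4 * π) ≤ p.2 ∧ ‖p.1 - x₀‖ ≤ Real.sqrt (n * r ^ 2 / (2 * π)) := by
  have hτ : 0 < t₀ - p.2 := by linarith
  have hn' : (1:ℝ) ≤ n := by exact_mod_cast hn
  set τ := t₀ - p.2 with hτd
  unfold gG lphi at h
  simp only [← hτd] at h
  have hpi := Real.pi_pos
  have e : Real.log (r ^ 2 / (4 * π * τ)) = 2 * Real.log r - Real.log (4 * π * τ) := by
    rw [Real.log_div (by positivity) (by positivity), Real.log_pow]; norm_num
  have h2 : ‖p.1 - x₀‖ ^ 2 / (4 * τ) ≤ (n / 2) * Real.log (r ^ 2 / (4 * π * τ)) := by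
    rw [e]; linarith
  have hx : 0 < r ^ 2 / (4 * π * τ) := by positivity
  constructor
  · have : 0 ≤ Real.log (r ^ 2 / (4 * π * τ)) := by
      by_contra hh
      push Not at hh
      have : 0 ≤ ‖p.1 - x₀‖ ^ 2 / (4 * τ) := by positivity
      nlinarith
    have h3 : 1 ≤ r ^ 2 / (4 * π * τ) := (Real.log_nonneg_iff hx).1 this
    rw [le_div_iff₀ (by positivity)] at h3
    have : τ ≤ r ^ 2 / (4 * π) := by rw [le_div_iff₀ (by positivity)]; linarith
    linarith
  · apply Real.le_sqrt_of_sq_le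
    have h3 := Real.log_le_sub_one_of_pos hx
    have h4 : ‖p.1 - x₀‖ ^ 2 / (4 * τ) ≤ (n / 2) * (r ^ 2 / (4 * π * τ)) :=
      h2.trans (by gcongr; linarith)
    rw [div_le_iff₀ (by positivity)] at h4
    refine h4.trans (le_of_eq ?_)
    field_simp

theorem wl_scale (l g a : ℝ) : Real.exp a * wl l (g - a) = wl (l + a) g := by
  unfold wl om
  by_cases h : l + a ≤ g
  · have h' : l ≤ g - a := by linarith
    simp only [h, h', if_true]
    rw [Real.exp_sub, Real.exp_add]
    field_simp
    ring
  · have h' : ¬ l ≤ g - a := by intro; apply h; linarith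
    simp [h, h']

theorem wl_tendsto (g : ℝ) : Tendsto (fun L => wl L g) atBot (nhds (Real.exp g)) := by
  have h1 : Tendsto (fun L : ℝ => L * Real.exp L) atBot (nhds 0) := by
    have := (Real.tendsto_pow_mul_exp_neg_atTop_nhds_zero 1).comp tendsto_neg_atBot_atTop
    simpa using this.neg
  have h2 : Tendsto (fun L : ℝ => Real.exp g - Real.exp L - (Real.exp L * g - L * Real.exp L)) atBot
      (nhds (Real.exp g - 0 - (0 * g - 0))) :=
    (tendsto_const_nhds.sub Real.tendsto_exp_atBot).sub ((Real.tendsto_exp_atBot.mul_const g).sub h1)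
  simp only [zero_mul, sub_zero] at h2
  refine h2.congr' ?_
  filter_upwards [eventually_le_atBot g] with L hL
  simp only [wl, hL, if_true, om]
  ring

theorem lphi_one {n : ℕ} (ξ : EV n) : Real.exp (lphi n (ξ, 1)) = (4 * π) ^ (-(n:ℝ) / 2) * Real.exp (-(1/4) * ‖ξ‖ ^ 2) := by
  unfold lphi
  rw [Real.rpow_def_of_pos (by positivity), ← Real.exp_add]
  congr 1
  simp only [mul_one]
  ring

theorem lphi_int {n : ℕ} : Integrable (fun ξ : EV n => Real.exp (lphi n (ξ, 1))) ∧
    ∫ ξ : EV n, Real.exp (lphi n (ξ, 1)) = 1 := by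
  have e : ∫ ξ : EV n, Real.exp (lphi n (ξ, 1)) = 1 := by
    simp only [lphi_one]
    rw [integral_const_mul, GaussianFourier.integral_rexp_neg_mul_sq_norm (by norm_num)]
    rw [finrank_euclideanSpace_fin, show π / (1/4) = 4 * π by ring, ← Real.rpow_add (by positivity)]
    rw [show -(n:ℝ) / 2 + n / 2 = 0 by ring, Real.rpow_zero]
  refine ⟨?_, e⟩
  by_contra h
  rw [integral_undef h] at e
  norm_num at e

theorem lim_wl {n : ℕ} (hn : 1 ≤ n) (x₀ : EV n) (t₀ l t₁ ρ : ℝ) (ht₁ : 0 < t₁) (h10 : t₁ < t₀)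
    (hE : ∀ p : EV n × ℝ, p.2 < t₀ → l ≤ gG x₀ t₀ p → t₁ < p.2 ∧ ‖p.1 - x₀‖ ≤ ρ)
    (F : EV n × ℝ → ℝ) (hF : Sm F) :
    Tendsto (fun T => ∫ y, wl l (gG x₀ t₀ (y, T)) * F (y, T)) (nhdsWithin t₀ (Iio t₀)) (nhds (F (x₀, t₀))) := by
  have hn' : (0:ℝ) < n := by exact_mod_cast hn
  have hFc : ∀ p : EV n × ℝ, 0 < p.2 → ContinuousAt F p := fun p hp => (hF p hp).continuousAt
  obtain ⟨C', hC'⟩ : ∃ C, ∀ p ∈ Metric.closedBall x₀ ρ ×ˢ Icc t₁ t₀, ‖F p‖ ≤ C :=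
    ((isCompact_closedBall x₀ ρ).prod isCompact_Icc).exists_bound_of_continuousOn
      fun p hp => (hFc p (lt_of_lt_of_le ht₁ hp.2.1)).continuousWithinAt
  obtain ⟨C, hC0, hC⟩ : ∃ C, 0 ≤ C ∧ ∀ p ∈ Metric.closedBall x₀ ρ ×ˢ Icc t₁ t₀, ‖F p‖ ≤ C :=
    ⟨max C' 0, le_max_right _ _, fun p hp => (hC' p hp).trans (le_max_left _ _)⟩
  have hsub : ∀ T < t₀, ∫ y, wl l (gG x₀ t₀ (y, T)) * F (y, T) =
      ∫ ξ : EV n, wl (l + n * Real.log (Real.sqrt (t₀ - T))) (lphi n (ξ, 1)) * F (x₀ + Real.sqrt (t₀ - T) • ξ, T) := by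
    intro T hT
    have hτ : 0 < t₀ - T := by linarith
    set s := Real.sqrt (t₀ - T) with hs
    have hs0 : 0 < s := Real.sqrt_pos.2 hτ
    have hss : s ^ 2 = t₀ - T := Real.sq_sqrt hτ.le
    have h1 := Measure.integral_comp_smul (volume : Measure (EV n))
      (fun y => wl l (gG x₀ t₀ (x₀ + y, T)) * F (x₀ + y, T)) s
    rw [integral_add_left_eq_self (fun y => wl l (gG x₀ t₀ (y, T)) * F (y, T)) x₀,
      finrank_euclideanSpace_fin, abs_of_pos (by positivity), smul_eq_mul, eq_comm, inv_mul_eq_iff_eq_mul₀ (by positivity)] at h1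
    rw [h1, ← integral_const_mul]
    congr 1
    ext ξ
    have hg : gG x₀ t₀ (x₀ + s • ξ, T) = lphi n (ξ, 1) - n * Real.log s := by
      unfold gG lphi
      simp only [add_sub_cancel_left, norm_smul, Real.norm_eq_abs, mul_pow, sq_abs, ← hss, mul_one]
      rw [Real.log_mul (by positivity) (by positivity), Real.log_pow]
      field_simp
      push_cast
      ring
    rw [hg, ← wl_scale, Real.exp_nat_mul, Real.exp_log hs0]
    ring
  have key : Tendsto (fun T => ∫ ξ : EV n, wl (l + n * Real.log (Real.sqrt (t₀ - T))) (lphi n (ξ, 1)) * F (x₀ + Real.sqrt (t₀ - T) • ξ, T))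
      (nhdsWithin t₀ (Iio t₀)) (nhds (∫ ξ : EV n, Real.exp (lphi n (ξ, 1)) * F (x₀, t₀))) := by
    have hs_t : Tendsto (fun T => Real.sqrt (t₀ - T)) (nhdsWithin t₀ (Iio t₀)) (nhdsWithin 0 (Ioi 0)) := by
      refine tendsto_nhdsWithin_iff.2 ⟨?_, ?_⟩
      · have : ContinuousAt (fun T => Real.sqrt (t₀ - T)) t₀ := by fun_prop
        have := this.tendsto.mono_left (nhdsWithin_le_nhds (s := Iio t₀))
        simpa using this
      · filter_upwards [self_mem_nhdsWithin] with T hT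
        exact Real.sqrt_pos.2 (sub_pos.2 hT)
    have hev : ∀ᶠ T in nhdsWithin t₀ (Iio t₀), t₁ < T := nhdsWithin_le_nhds (lt_mem_nhds h10)
    refine tendsto_integral_filter_of_dominated_convergence (fun ξ => Real.exp (lphi n (ξ, 1)) * C) ?_ ?_
      (lphi_int.1.mul_const C) ?_
    · filter_upwards [hev] with T hT
      refine Continuous.aestronglyMeasurable ?_
      have c1 : Continuous fun ξ : EV n => F (x₀ + Real.sqrt (t₀ - T) • ξ, T) := by
        rw [continuous_iff_continuousAt]
        intro ξ
        exact ContinuousAt.comp (f := fun ξ : EV n => (x₀ + Real.sqrt (t₀ - T) • ξ, T)) (g := F)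
          (hFc (x₀ + Real.sqrt (t₀ - T) • ξ, T) (ht₁.trans hT)) (by fun_prop)
      have c2 : Continuous fun ξ : EV n => lphi n (ξ, 1) := by simp only [lphi, mul_one]; fun_prop
      exact ((wl_cont _).comp c2).mul c1
    · filter_upwards [hev, self_mem_nhdsWithin] with T hT1 hT
      refine ae_of_all _ fun ξ => ?_
      have hτ : 0 < t₀ - T := sub_pos.2 hT
      set s := Real.sqrt (t₀ - T) with hs
      have hs0 : 0 < s := Real.sqrt_pos.2 hτ
      have hss : s ^ 2 = t₀ - T := Real.sq_sqrt hτ.le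
      have hg : gG x₀ t₀ (x₀ + s • ξ, T) = lphi n (ξ, 1) - n * Real.log s := by
        unfold gG lphi
        simp only [add_sub_cancel_left, norm_smul, Real.norm_eq_abs, mul_pow, sq_abs, ← hss, mul_one]
        rw [Real.log_mul (by positivity) (by positivity), Real.log_pow]
        field_simp
        push_cast
        ring
      rw [norm_mul, Real.norm_of_nonneg (wl_nonneg _ _)]
      by_cases hle : l + n * Real.log s ≤ lphi n (ξ, 1)
      · have h3 := hE (x₀ + s • ξ, T) hT (by rw [hg]; linarith)
        have h4 := hC (x₀ + s • ξ, T) ⟨by simpa [dist_eq_norm] using h3.2, h3.1.le, le_of_lt hT⟩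
        exact mul_le_mul (wl_le _ _) h4 (norm_nonneg _) (Real.exp_pos _).le
      · simp only [wl, hle, if_false, zero_mul]
        positivity
    · refine ae_of_all _ fun ξ => ?_
      have hL : Tendsto (fun T => l + n * Real.log (Real.sqrt (t₀ - T))) (nhdsWithin t₀ (Iio t₀)) atBot :=
        tendsto_atBot_add_const_left _ _ ((Real.tendsto_log_nhdsGT_zero.comp hs_t).const_mul_atBot hn')
      refine ((wl_tendsto _).comp hL).mul ?_
      have h5 : Tendsto (fun T => (x₀ + Real.sqrt (t₀ - T) • ξ, T)) (nhdsWithin t₀ (Iio t₀)) (nhds (x₀, t₀)) := by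
        have : ContinuousAt (fun T => (x₀ + Real.sqrt (t₀ - T) • ξ, T)) t₀ := by fun_prop
        have := this.tendsto.mono_left (nhdsWithin_le_nhds (s := Iio t₀))
        simpa using this
      exact (hFc (x₀, t₀) (ht₁.trans h10)).tendsto.comp h5
  rw [integral_mul_const, lphi_int.2, one_mul] at key
  refine key.congr' ?_
  filter_upwards [self_mem_nhdsWithin] with T hT
  exact (hsub T hT).symm

/-- full heat ball -/
def EE {n : ℕ} (x₀ : EV n) (t₀ l : ℝ) : Set (EV n × ℝ) := {p | 0 < p.2 ∧ p.2 < t₀ ∧ l ≤ gG x₀ t₀ p}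

/-- exhausting times -/
noncomputable def tk (t₀ t₁ : ℝ) (k : ℕ) : ℝ := t₀ - (t₀ - t₁) / (k + 1)

theorem tk_lt (t₀ t₁ : ℝ) (h : t₁ < t₀) (k : ℕ) : tk t₀ t₁ k < t₀ ∧ t₁ ≤ tk t₀ t₁ k := by
  unfold tk
  have h0 : 0 < t₀ - t₁ := by linarith
  have : 0 < (t₀ - t₁) / ((k:ℝ) + 1) := by positivity
  have : (t₀ - t₁) / ((k:ℝ) + 1) ≤ t₀ - t₁ := div_le_self h0.le (by simp)
  constructor <;> linarith

theorem tk_tendsto (t₀ t₁ : ℝ) (h : t₁ < t₀) : Tendsto (tk t₀ t₁) atTop (nhdsWithin t₀ (Iio t₀)) := by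
  refine tendsto_nhdsWithin_iff.2 ⟨?_, Eventually.of_forall fun k => (tk_lt t₀ t₁ h k).1⟩
  have := (tendsto_one_div_add_atTop_nhds_zero_nat (𝕜 := ℝ)).const_mul (t₀ - t₁)
  have := this.const_sub t₀
  simp only [mul_zero, sub_zero, mul_one_div] at this
  exact this

section
variable {n : ℕ} [Nontrivial (EV n)] (x₀ : EV n) (t₀ l t₁ ρ : ℝ)

theorem EE_cover (ht₁ : 0 < t₁) (h10 : t₁ < t₀)
    (hE : ∀ p : EV n × ℝ, p.2 < t₀ → l ≤ gG x₀ t₀ p → t₁ < p.2 ∧ ‖p.1 - x₀‖ ≤ ρ) :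
    MeasurableSet (EE x₀ t₀ l) ∧
    AECover (volume.restrict (EE x₀ t₀ l)) atTop (fun k => Er x₀ t₀ l (tk t₀ t₁ k)) := by
  have hm : ∀ k, MeasurableSet (Er x₀ t₀ l (tk t₀ t₁ k)) := fun k =>
    (Er_compact x₀ t₀ l _ t₁ ρ ht₁ (tk_lt t₀ t₁ h10 k).1 hE).isClosed.measurableSet
  have hev : ∀ p ∈ EE x₀ t₀ l, ∀ᶠ k in atTop, p ∈ Er x₀ t₀ l (tk t₀ t₁ k) := by
    intro p hp
    have := ((tk_tendsto t₀ t₁ h10).mono_right nhdsWithin_le_nhds).eventually (lt_mem_nhds hp.2.1)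
    filter_upwards [this] with k hk
    exact ⟨hp.1, hk.le, hp.2.2⟩
  have hmE : MeasurableSet (EE x₀ t₀ l) := by
    have : EE x₀ t₀ l = ⋃ k, Er x₀ t₀ l (tk t₀ t₁ k) := by
      ext p
      rw [mem_iUnion]
      refine ⟨fun hp => (hev p hp).exists, ?_⟩
      rintro ⟨k, h0, h1, h2⟩
      exact ⟨h0, lt_of_le_of_lt h1 (tk_lt t₀ t₁ h10 k).1, h2⟩
    rw [this]; exact MeasurableSet.iUnion hm
  refine ⟨hmE, ⟨?_, hm⟩⟩
  exact (ae_restrict_iff' hmE).2 (ae_of_all _ hev)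

theorem Er_restrict (T : ℝ) (hT : T < t₀) :
    (volume.restrict (EE x₀ t₀ l)).restrict (Er x₀ t₀ l T) = volume.restrict (Er x₀ t₀ l T) :=
  Measure.restrict_restrict_of_subset fun _ h => ⟨h.1, lt_of_le_of_lt h.2.1 hT, h.2.2⟩

theorem lim_S (hn : 1 ≤ n) (ht₁ : 0 < t₁) (h10 : t₁ < t₀)
    (hE : ∀ p : EV n × ℝ, p.2 < t₀ → l ≤ gG x₀ t₀ p → t₁ < p.2 ∧ ‖p.1 - x₀‖ ≤ ρ)
    (F : EV n × ℝ → ℝ) (hF : Sm F) :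
    Tendsto (fun k => ∫ p in Er x₀ t₀ l (tk t₀ t₁ k), ‖p.1 - x₀‖ ^ 2 / (4 * (t₀ - p.2) ^ 2) * F p) atTop
      (nhds (∫ p in EE x₀ t₀ l, ‖p.1 - x₀‖ ^ 2 / (4 * (t₀ - p.2) ^ 2) * F p)) := by
  obtain ⟨hmE, hcov⟩ := EE_cover x₀ t₀ l t₁ ρ ht₁ h10 hE
  have hk := fun k => key_id x₀ t₀ l _ t₁ ρ ht₁ (tk_lt t₀ t₁ h10 k).1 (tk_lt t₀ t₁ h10 k).2 hE (fun _ => 1) (Sm.const 1)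
  have hS : Integrable (fun p : EV n × ℝ => ‖p.1 - x₀‖ ^ 2 / (4 * (t₀ - p.2) ^ 2)) (volume.restrict (EE x₀ t₀ l)) := by
    refine hcov.integrable_of_integral_tendsto_of_nonneg_ae (Real.exp (-l) * 1) ?_ (ae_of_all _ fun p => by positivity) ?_
    · intro k
      rw [IntegrableOn, Er_restrict x₀ t₀ l _ (tk_lt t₀ t₁ h10 k).1]
      exact (by simpa using (hk k).1 : IntegrableOn (fun p : EV n × ℝ => ‖p.1 - x₀‖ ^ 2 / (4 * (t₀ - p.2) ^ 2)) (Er x₀ t₀ l (tk t₀ t₁ k)))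
    · have := ((lim_wl hn x₀ t₀ l t₁ ρ ht₁ h10 hE (fun _ => 1) (Sm.const 1)).comp (tk_tendsto t₀ t₁ h10)).const_mul (Real.exp (-l))
      refine this.congr fun k => ?_
      rw [Er_restrict x₀ t₀ l _ (tk_lt t₀ t₁ h10 k).1]
      simp only [Function.comp]
      rw [(hk k).2.2]
      have h0 : ∀ p, Hop (fun _ : EV n × ℝ => (1:ℝ)) p = 0 := by
        intro p
        have e : ∀ w : EV n × ℝ, dd w (fun _ : EV n × ℝ => (1:ℝ)) = fun _ => 0 := fun w => by ext q; exact dd_const _ _ _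
        simp [Hop, e, dd_const]
      simp only [h0, mul_zero, integral_zero, add_zero, mul_one]
      rw [← mul_assoc, ← Real.exp_add]; simp
  have hFc : ∀ p : EV n × ℝ, 0 < p.2 → ContinuousAt F p := fun p hp => (hF p hp).continuousAt
  obtain ⟨C, hC⟩ : ∃ C, ∀ p ∈ Metric.closedBall x₀ ρ ×ˢ Icc t₁ t₀, ‖F p‖ ≤ C :=
    ((isCompact_closedBall x₀ ρ).prod isCompact_Icc).exists_bound_of_continuousOn
      fun p hp => (hFc p (lt_of_lt_of_le ht₁ hp.2.1)).continuousWithinAt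
  have hSF : Integrable (fun p : EV n × ℝ => ‖p.1 - x₀‖ ^ 2 / (4 * (t₀ - p.2) ^ 2) * F p) (volume.restrict (EE x₀ t₀ l)) := by
    refine hS.mul_bdd (c := C) ?_ ?_
    · exact ContinuousOn.aestronglyMeasurable (fun p hp => (hFc p hp.1).continuousWithinAt) hmE
    · refine (ae_restrict_iff' hmE).2 (ae_of_all _ fun p hp => ?_)
      have := hE p hp.2.1 hp.2.2
      exact hC p ⟨by simpa [dist_eq_norm] using this.2, this.1.le, hp.2.1.le⟩
  refine (hcov.integral_tendsto_of_countably_generated hSF).congr fun k => ?_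
  rw [Er_restrict x₀ t₀ l _ (tk_lt t₀ t₁ h10 k).1]

theorem mainA (hn : 1 ≤ n) (ht₁ : 0 < t₁) (h10 : t₁ < t₀)
    (hE : ∀ p : EV n × ℝ, p.2 < t₀ → l ≤ gG x₀ t₀ p → t₁ < p.2 ∧ ‖p.1 - x₀‖ ≤ ρ)
    (F : EV n × ℝ → ℝ) (hF : Sm F) (hH : ∀ p : EV n × ℝ, 0 < p.2 → 0 ≤ Hop F p) :
    Real.exp l * ∫ p in EE x₀ t₀ l, ‖p.1 - x₀‖ ^ 2 / (4 * (t₀ - p.2) ^ 2) * F p ≤ F (x₀, t₀) := by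
  have hk := fun k => key_id x₀ t₀ l _ t₁ ρ ht₁ (tk_lt t₀ t₁ h10 k).1 (tk_lt t₀ t₁ h10 k).2 hE F hF
  refine le_of_tendsto_of_tendsto' ((lim_S x₀ t₀ l t₁ ρ hn ht₁ h10 hE F hF).const_mul (Real.exp l))
    ((lim_wl hn x₀ t₀ l t₁ ρ ht₁ h10 hE F hF).comp (tk_tendsto t₀ t₁ h10)) fun k => ?_
  simp only [Function.comp]
  rw [(hk k).2.2]
  have hm := (Er_compact x₀ t₀ l _ t₁ ρ ht₁ (tk_lt t₀ t₁ h10 k).1 hE).isClosed.measurableSet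
  have := setIntegral_nonneg hm (f := fun p => wl l (gG x₀ t₀ p) * Hop F p) (μ := volume)
    fun p hp => mul_nonneg (wl_nonneg _ _) (hH p hp.1)
  linarith

theorem mainB (hn : 1 ≤ n) (ht₁ : 0 < t₁) (h10 : t₁ < t₀)
    (hE : ∀ p : EV n × ℝ, p.2 < t₀ → l ≤ gG x₀ t₀ p → t₁ < p.2 ∧ ‖p.1 - x₀‖ ≤ ρ)
    (F : EV n × ℝ → ℝ) (hF : Sm F) (hH : ∀ p : EV n × ℝ, 0 < p.2 → 0 ≤ Hop F p) (l' : ℝ) (hl : l ≤ l') :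
    Real.exp l * ∫ p in EE x₀ t₀ l, ‖p.1 - x₀‖ ^ 2 / (4 * (t₀ - p.2) ^ 2) * F p ≤
    Real.exp l' * ∫ p in EE x₀ t₀ l', ‖p.1 - x₀‖ ^ 2 / (4 * (t₀ - p.2) ^ 2) * F p := by
  have hE' : ∀ p : EV n × ℝ, p.2 < t₀ → l' ≤ gG x₀ t₀ p → t₁ < p.2 ∧ ‖p.1 - x₀‖ ≤ ρ :=
    fun p h1 h2 => hE p h1 (hl.trans h2)
  have hk := fun k => key_id x₀ t₀ l _ t₁ ρ ht₁ (tk_lt t₀ t₁ h10 k).1 (tk_lt t₀ t₁ h10 k).2 hE F hF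
  have hk' := fun k => key_id x₀ t₀ l' _ t₁ ρ ht₁ (tk_lt t₀ t₁ h10 k).1 (tk_lt t₀ t₁ h10 k).2 hE' F hF
  have L := ((lim_S x₀ t₀ l t₁ ρ hn ht₁ h10 hE F hF).const_mul (Real.exp l)).sub
    ((lim_wl hn x₀ t₀ l t₁ ρ ht₁ h10 hE F hF).comp (tk_tendsto t₀ t₁ h10))
  have L' := ((lim_S x₀ t₀ l' t₁ ρ hn ht₁ h10 hE' F hF).const_mul (Real.exp l')).sub
    ((lim_wl hn x₀ t₀ l' t₁ ρ ht₁ h10 hE' F hF).comp (tk_tendsto t₀ t₁ h10))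
  have := le_of_tendsto_of_tendsto' L L' fun k => ?_
  · linarith
  simp only [Function.comp]
  rw [(hk k).2.2, (hk' k).2.2]
  have hm := (Er_compact x₀ t₀ l _ t₁ ρ ht₁ (tk_lt t₀ t₁ h10 k).1 hE).isClosed.measurableSet
  have hm' := (Er_compact x₀ t₀ l' _ t₁ ρ ht₁ (tk_lt t₀ t₁ h10 k).1 hE').isClosed.measurableSet
  have hsub : Er x₀ t₀ l' (tk t₀ t₁ k) ⊆ Er x₀ t₀ l (tk t₀ t₁ k) := fun p hp => ⟨hp.1, hp.2.1, hl.trans hp.2.2⟩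
  have a1 := setIntegral_mono_on (hk' k).2.1 ((hk k).2.1.mono_set hsub) hm'
    fun p hp => mul_le_mul_of_nonneg_right (wl_anti hl (gG x₀ t₀ p)) (hH p hp.1)
  have a2 := setIntegral_mono_set (hk k).2.1 (t := Er x₀ t₀ l (tk t₀ t₁ k)) (s := Er x₀ t₀ l' (tk t₀ t₁ k))
    ((ae_restrict_iff' hm).2 (ae_of_all _ fun p hp => mul_nonneg (wl_nonneg _ _) (hH p hp.1)))
    (LE.le.eventuallyLE hsub)
  linarith
end

/-- Localized Li–Yau monotonicity (Example 3 of Section 5 of the paper) on ℝⁿ: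
with `Q = t² u (Δ log u + n/(2t))` and `I(r) = r^{-n} ∫_{E_r} ‖∇ψ_r‖² Q`, the
function `I` is nonincreasing and `t₀² u(Δ log u + n/(2t₀))(x₀,t₀) ≥ I(r₂)`. -/
theorem stmt14 (n : ℕ) (hn : 1 ≤ n)
    (u₀ : EuclideanSpace ℝ (Fin n) → ℝ) (hc : Continuous u₀)
    (hsupp : HasCompactSupport u₀) (hnn : ∀ z, 0 ≤ u₀ z) (hne : ∃ z, u₀ z ≠ 0)
    (u : EuclideanSpace ℝ (Fin n) → ℝ → ℝ)
    (hu : ∀ y t, u y t = ∫ z, heatK n y z t * u₀ z)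
    (x₀ : EuclideanSpace ℝ (Fin n)) (t₀ : ℝ) (ht₀ : 0 < t₀)
    (hatH : EuclideanSpace ℝ (Fin n) → ℝ → ℝ)
    (hhatH : ∀ y t, hatH y t
      = (4 * π * (t₀ - t)) ^ (-(n : ℝ) / 2)
          * Real.exp (-‖x₀ - y‖ ^ 2 / (4 * (t₀ - t))))
    (E : ℝ → Set ((EuclideanSpace ℝ (Fin n)) × ℝ))
    (hE : ∀ r, E r
      = {p | 0 < p.2 ∧ p.2 < t₀ ∧ (r : ℝ) ^ (-(n : ℝ)) ≤ hatH p.1 p.2})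
    (Q : EuclideanSpace ℝ (Fin n) → ℝ → ℝ)
    (hQ : ∀ y t, Q y t
      = t ^ 2 * u y t * (lap (fun z => Real.log (u z t)) y + n / (2 * t)))
    (I : ℝ → ℝ)
    (hI : ∀ r, I r = r ^ (-(n : ℝ)) * ∫ p in E r,
      ‖gradient (fun z => Real.log (hatH z p.2) + n * Real.log r) p.1‖ ^ 2
        * Q p.1 p.2) :
    ∀ r₁ r₂ : ℝ, 0 < r₁ → r₁ ≤ r₂ → r₂ ^ 2 < 4 * π * t₀ →
      I r₂ ≤ I r₁
      ∧ I r₂ ≤ t₀ ^ 2 * u x₀ t₀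
          * (lap (fun z => Real.log (u z t₀)) x₀ + n / (2 * t₀)) := by
  intro r₁ r₂ hr₁ h12 hr₂t
  have hr₂ : 0 < r₂ := hr₁.trans_le h12
  have hpi := Real.pi_pos
  have : Nonempty (Fin n) := ⟨⟨0, hn⟩⟩
  have : Nontrivial (EV n) := inferInstanceAs (Nontrivial (EuclideanSpace ℝ (Fin n)))
  have hu' : ∀ y t, u y t = hP u₀ (y, t) := fun y t => hu y t
  have hQ' : ∀ y t, 0 < t → Q y t = QF u₀ (y, t) := by
    intro y t ht
    rw [hQ, ← QF_eq u₀ hc hsupp hnn hne y t ht]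
    simp only [hu']
  have hH : ∀ y t, t < t₀ → hatH y t = Real.exp (gG x₀ t₀ (y, t)) := by
    intro y t ht
    have hτ : 0 < t₀ - t := by linarith
    rw [hhatH]
    unfold gG lphi
    rw [Real.rpow_def_of_pos (by positivity), ← Real.exp_add, norm_sub_rev]
    congr 1
    ring
  have hrl : ∀ r : ℝ, 0 < r → r ^ (-(n:ℝ)) = Real.exp (-(n * Real.log r)) := by
    intro r hr
    rw [Real.rpow_def_of_pos hr]; congr 1; ring
  have hEE : ∀ r : ℝ, 0 < r → E r = EE x₀ t₀ (-(n * Real.log r)) := by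
    intro r hr
    rw [hE]
    ext p
    constructor
    · rintro ⟨h0, h1, h2⟩
      refine ⟨h0, h1, ?_⟩
      rw [hrl r hr, hH _ _ h1, Real.exp_le_exp] at h2
      exact h2
    · rintro ⟨h0, h1, h2⟩
      refine ⟨h0, h1, ?_⟩
      rw [hrl r hr, hH _ _ h1, Real.exp_le_exp]
      exact h2
  have hgrad : ∀ (r : ℝ) (p : EV n × ℝ), p.2 < t₀ →
      ‖gradient (fun z => Real.log (hatH z p.2) + n * Real.log r) p.1‖ ^ 2
        = ‖p.1 - x₀‖ ^ 2 / (4 * (t₀ - p.2) ^ 2) := by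
    intro r p hp
    have hτ : 0 < t₀ - p.2 := by linarith
    have e : (fun z => Real.log (hatH z p.2) + n * Real.log r)
        = fun z => gG x₀ t₀ (z, p.2) + n * Real.log r := by
      ext z; rw [hH z p.2 hp, Real.log_exp]
    have hg : HasGradientAt (fun z => gG x₀ t₀ (z, p.2) + n * Real.log r)
        (-(2 * (t₀ - p.2))⁻¹ • (p.1 - x₀)) p.1 := by
      rw [hasGradientAt_iff_hasFDerivAt]
      have h1 : HasFDerivAt (fun z : EV n => ‖z - x₀‖ ^ 2) _ p.1 :=
        ((hasFDerivAt_id p.1).sub_const x₀).norm_sq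
      have h2 := ((h1.const_mul (-(4 * (t₀ - p.2))⁻¹)).const_add
        (-((n:ℝ)/2) * Real.log (4 * π * (t₀ - p.2)) + n * Real.log r))
      have e2 : (fun z => gG x₀ t₀ (z, p.2) + n * Real.log r) = fun z =>
          (-((n:ℝ)/2) * Real.log (4 * π * (t₀ - p.2)) + n * Real.log r) + -(4 * (t₀ - p.2))⁻¹ * ‖z - x₀‖ ^ 2 := by
        ext z; unfold gG lphi; simp only; ring
      rw [e2]
      refine h2.congr_fderiv ?_
      ext v
      simp [inner_smul_left]
      field_simp
      norm_num
    rw [e, hg.gradient, norm_smul, mul_pow, Real.norm_eq_abs, sq_abs]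
    field_simp
    ring
  have hI' : ∀ r : ℝ, 0 < r → MeasurableSet (EE x₀ t₀ (-(n * Real.log r))) → I r = Real.exp (-(n * Real.log r)) *
      ∫ p in EE x₀ t₀ (-(n * Real.log r)), ‖p.1 - x₀‖ ^ 2 / (4 * (t₀ - p.2) ^ 2) * QF u₀ p := by
    intro r hr hm
    rw [hI, hrl r hr, hEE r hr]
    congr 1
    refine setIntegral_congr_fun hm fun p hp => ?_
    rw [hgrad r p hp.2.1, hQ' p.1 p.2 hp.1]
  have hF := QF_smooth u₀ hc hsupp hnn hne
  have hHop := fun p hp => QF_Hop u₀ hc hsupp hnn hne p hp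
  have hd : 0 < t₀ - r₂ ^ 2 / (4 * π) := by
    rw [sub_pos, div_lt_iff₀ (by positivity)]; linarith
  have hq : 0 < r₂ ^ 2 / (4 * π) := by positivity
  have hEb : ∀ p : EV n × ℝ, p.2 < t₀ → -(n * Real.log r₂) ≤ gG x₀ t₀ p →
      (t₀ - r₂ ^ 2 / (4 * π)) / 2 < p.2 ∧ ‖p.1 - x₀‖ ≤ Real.sqrt (n * r₂ ^ 2 / (2 * π)) := by
    intro p hp h
    have := hE_ok hn x₀ t₀ r₂ hr₂ p hp h
    exact ⟨by linarith, this.2⟩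
  have hll : -(n * Real.log r₂) ≤ -(n * Real.log r₁) := by
    have := Real.log_le_log hr₁ h12
    have h0 : (0:ℝ) ≤ n := by positivity
    nlinarith
  have hm₂ := (EE_cover x₀ t₀ _ _ _ (by linarith) (by linarith) hEb).1
  have hm₁ := (EE_cover x₀ t₀ (-(n * Real.log r₁)) _ _ (by linarith) (by linarith)
    (fun p hp h => hEb p hp (hll.trans h))).1
  rw [hI' r₂ hr₂ hm₂, hI' r₁ hr₁ hm₁]
  refine ⟨mainB x₀ t₀ _ _ _ hn (by linarith) (by linarith) hEb _ hF hHop _ hll, ?_⟩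
  have := mainA x₀ t₀ _ _ _ hn (by linarith) (by linarith) hEb _ hF hHop
  rw [← hQ, hQ' x₀ t₀ ht₀]
  exact this
end

section
/- Let u(y,t) = ∫_{ℝⁿ} K(y,z,t) u₀(z) dz, where K is the Euclidean heat kernel on ℝⁿ and u₀ : ℝⁿ → ℝ is continuous, compactly supported, nonnegative, and not identically zero. Then for every y ∈ ℝⁿ and t > 0, the symmetric matrix ∇² log u(y,t) + (1/(2t)) I is positive semidefinite. -/
open Real MeasureTheory Filter Set

/-- `(i,j)` entry of the Hessian of `f : ℝⁿ → ℝ`. -/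
noncomputable def hess {n : ℕ} (i j : Fin n) (f : EuclideanSpace ℝ (Fin n) → ℝ)
    (y : EuclideanSpace ℝ (Fin n)) : ℝ :=
  pdv i (pdv j f) y

lemma aux_line {n : ℕ} {f : EuclideanSpace ℝ (Fin n) → ℝ} (hf : ContDiff ℝ 2 f)
    (y v : EuclideanSpace ℝ (Fin n)) :
    ∀ s : ℝ, HasDerivAt (fun s : ℝ => f (y + s • v)) (fderiv ℝ f (y + s • v) v) s := by
  intro s
  have h1 : HasDerivAt (fun s : ℝ => y + s • v) v s := by
    simpa using ((hasDerivAt_id s).smul_const v).const_add y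
  exact ((hf.differentiable (by norm_num)) (y + s • v)).hasFDerivAt.comp_hasDerivAt s h1

lemma aux_line2 {n : ℕ} {f : EuclideanSpace ℝ (Fin n) → ℝ} (hf : ContDiff ℝ 2 f)
    (y v : EuclideanSpace ℝ (Fin n)) :
    HasDerivAt (fun s : ℝ => fderiv ℝ f (y + s • v) v) (fderiv ℝ (fderiv ℝ f) y v v) 0 := by
  have h1 : HasDerivAt (fun s : ℝ => y + s • v) v 0 := by
    simpa using ((hasDerivAt_id (0:ℝ)).smul_const v).const_add y
  have hd : Differentiable ℝ (fderiv ℝ f) :=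
    (hf.fderiv_right (m := 1) (by norm_num)).differentiable (by norm_num)
  have h2 : HasFDerivAt (fderiv ℝ f) (fderiv ℝ (fderiv ℝ f) y) (y + (0:ℝ) • v) := by
    simpa using (hd y).hasFDerivAt
  have h3 := h2.comp_hasDerivAt (0:ℝ) h1
  simpa using h3.clm_apply (hasDerivAt_const (0:ℝ) v)

lemma aux_hess {n : ℕ} {f : EuclideanSpace ℝ (Fin n) → ℝ} (hf : ContDiff ℝ 2 f)
    (y : EuclideanSpace ℝ (Fin n)) (i j : Fin n) :
    hess i j f y = fderiv ℝ (fderiv ℝ f) y (EuclideanSpace.single i 1)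
      (EuclideanSpace.single j 1) := by
  have hd : Differentiable ℝ (fderiv ℝ f) :=
    (hf.fderiv_right (m := 1) (by norm_num)).differentiable (by norm_num)
  have := (hd y).hasFDerivAt.clm_apply
    (hasFDerivAt_const (EuclideanSpace.single j (1:ℝ)) y)
  unfold hess pdv
  rw [this.fderiv]
  simp

lemma aux_smooth {n : ℕ} {u₀ g : EuclideanSpace ℝ (Fin n) → ℝ} (hc : Continuous u₀)
    (hsupp : HasCompactSupport u₀) (hg : ContDiff ℝ 2 g) :
    ContDiff ℝ 2 (fun y => ∫ z, g (y - z) * u₀ z) := by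
  rw [contDiff_iff_contDiffAt]
  intro y
  obtain ⟨R, hR0, hR⟩ : ∃ R : ℝ, 0 < R ∧ tsupport u₀ ⊆ Metric.closedBall 0 R := by
    obtain ⟨R, hR⟩ := hsupp.isCompact.isBounded.subset_closedBall 0
    exact ⟨max R 1, by positivity, hR.trans (Metric.closedBall_subset_closedBall (le_max_left _ _))⟩
  let χ : ContDiffBump (0 : EuclideanSpace ℝ (Fin n)) :=
    ⟨R + ‖y‖ + 1, R + ‖y‖ + 2, by positivity, by linarith⟩
  have hk : ContDiff ℝ ((2 : ℕ∞) : WithTop ℕ∞) (fun x => χ x * g x) :=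
    (χ.contDiff).mul hg
  have hs : HasCompactSupport (fun x => χ x * g x) := χ.hasCompactSupport.mul_right
  have hconv := hs.contDiff_convolution_right (ContinuousLinearMap.lsmul ℝ ℝ)
    (hc.locallyIntegrable (μ := volume)) hk
  refine (hconv.contDiffAt (x := y)).congr_of_eventuallyEq ?_
  filter_upwards [Metric.ball_mem_nhds y one_pos] with x hx
  rw [convolution_lsmul]
  congr 1
  ext z
  by_cases hz : u₀ z = 0
  · simp [hz]
  · have hz' := hR (subset_tsupport _ hz)
    have : χ (x - z) = 1 := by
      apply χ.one_of_mem_closedBall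
      simp only [mem_closedBall_zero_iff] at hz' ⊢
      have h1 : ‖x - y‖ < 1 := by simpa [dist_eq_norm] using hx
      calc ‖x - z‖ = ‖(x - y) + y - z‖ := by simp
        _ ≤ ‖x - y‖ + ‖y‖ + ‖z‖ := (norm_sub_le _ _).trans (by gcongr; exact norm_add_le _ _)
        _ ≤ R + ‖y‖ + 1 := by linarith
    simp [this, mul_comm]

open ProbabilityTheory in
lemma aux_cgf {n : ℕ} {w X : EuclideanSpace ℝ (Fin n) → ℝ} (hw : Continuous w)
    (hsupp : HasCompactSupport w) (hnn : ∀ z, 0 ≤ w z) (hX : Continuous X) :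
    ∃ μ : Measure (EuclideanSpace ℝ (Fin n)),
      (∀ s, mgf X μ s = ∫ z, w z * Real.exp (s * X z)) ∧ 0 ≤ iteratedDeriv 2 (cgf X μ) 0 := by
  have hm : Measurable fun z => ENNReal.ofReal (w z) := hw.measurable.ennreal_ofReal
  refine ⟨volume.withDensity fun z => ENNReal.ofReal (w z), ?_, ?_⟩
  · intro s
    rw [mgf, integral_withDensity_eq_integral_toReal_smul₀ hm.aemeasurable (by simp)]
    simp [ENNReal.toReal_ofReal, hnn]
  · have hI : integrableExpSet X (volume.withDensity fun z => ENNReal.ofReal (w z)) = univ := by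
      ext s
      simp only [integrableExpSet, mem_ofPred_eq, mem_univ, iff_true]
      rw [integrable_withDensity_iff_integrable_smul' hm (by simp)]
      simp only [ENNReal.toReal_ofReal, hnn, smul_eq_mul]
      exact Continuous.integrable_of_hasCompactSupport (by fun_prop) hsupp.mul_right
    rw [← variance_tilted_mul (by simp [hI])]
    exact variance_nonneg _ _

lemma aux_second {n : ℕ} {u₀ : EuclideanSpace ℝ (Fin n) → ℝ} (hc : Continuous u₀)
    (hsupp : HasCompactSupport u₀) (hnn : ∀ z, 0 ≤ u₀ z) (t : ℝ) (ht : 0 < t)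
    {U : EuclideanSpace ℝ (Fin n) → ℝ} (hU : ∀ y, U y = ∫ z, heatK n y z t * u₀ z)
    (hpos : ∀ y, 0 < U y) (hf : ContDiff ℝ 2 fun z => Real.log (U z))
    (y v : EuclideanSpace ℝ (Fin n)) :
    0 ≤ fderiv ℝ (fderiv ℝ fun z => Real.log (U z)) y v v + ‖v‖ ^ 2 / (2 * t) := by
  set c : ℝ := (4 * π * t) ^ (-(n : ℝ) / 2) with hcdef
  have hc0 : 0 < c := by positivity
  obtain ⟨μ, hμ, hμ2⟩ := aux_cgf (w := fun z => Real.exp (-‖y - z‖ ^ 2 / (4 * t)) * u₀ z)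
    (X := fun z => inner ℝ v (z - y) / (2 * t)) (by fun_prop) hsupp.mul_left
    (fun z => mul_nonneg (Real.exp_pos _).le (hnn z)) (by fun_prop)
  have key : ∀ s : ℝ, U (y + s • v) =
      c * Real.exp (-(s ^ 2 * (‖v‖ ^ 2 / (4 * t)))) *
        ProbabilityTheory.mgf (fun z => inner ℝ v (z - y) / (2 * t)) μ s := by
    intro s
    rw [hU, hμ, ← integral_const_mul]
    congr 1
    ext z
    have e : -‖y + s • v - z‖ ^ 2 / (4 * t) = -(s ^ 2 * (‖v‖ ^ 2 / (4 * t)))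
        + -‖y - z‖ ^ 2 / (4 * t) + s * (inner ℝ v (z - y) / (2 * t)) := by
      have e1 : y + s • v - z = s • v - (z - y) := by abel
      have e2 : ‖y - z‖ = ‖z - y‖ := norm_sub_rev _ _
      rw [e1, e2, norm_sub_sq_real, inner_smul_left, norm_smul, mul_pow]
      simp
      field_simp
      ring
    rw [heatK, e, Real.exp_add, Real.exp_add]
    ring
  have hcgf : ProbabilityTheory.cgf (fun z => inner ℝ v (z - y) / (2 * t)) μ =
      fun s => Real.log (U (y + s • v)) + (s ^ 2 * (‖v‖ ^ 2 / (4 * t)) - Real.log c) := by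
    ext s
    have hp := hpos (y + s • v)
    rw [key s] at hp
    have hm := (pos_iff_pos_of_mul_pos hp).1 (by positivity)
    rw [key s, Real.log_mul (by positivity) hm.ne', Real.log_mul hc0.ne' (Real.exp_pos _).ne',
      Real.log_exp, ProbabilityTheory.cgf]
    ring
  rw [hcgf, iteratedDeriv_succ, iteratedDeriv_one] at hμ2
  have d1 : deriv (fun s : ℝ => Real.log (U (y + s • v)) +
      (s ^ 2 * (‖v‖ ^ 2 / (4 * t)) - Real.log c)) =
      fun s => fderiv ℝ (fun z => Real.log (U z)) (y + s • v) v + s * (‖v‖ ^ 2 / (2 * t)) := by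
    ext s
    have h2 : HasDerivAt (fun s : ℝ => s ^ 2 * (‖v‖ ^ 2 / (4 * t)) - Real.log c)
        (s * (‖v‖ ^ 2 / (2 * t))) s := by
      refine (((hasDerivAt_pow 2 s).mul_const (‖v‖ ^ 2 / (4 * t))).sub_const
        (Real.log c)).congr_deriv ?_
      push_cast
      field_simp
      ring
    exact ((aux_line hf y v s).add h2).deriv
  rw [d1, ((aux_line2 hf y v).fun_add
    (by simpa using (hasDerivAt_id (0:ℝ)).mul_const (‖v‖ ^ 2 / (2 * t)))).deriv] at hμ2
  exact hμ2


/-- Matrix Li–Yau–Hamilton inequality on flat ℝⁿ: for the positive solution `u`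
of the heat equation with initial data `u₀`, the symmetric matrix
`∇² log u + (1/(2t)) I` is positive semidefinite for every `t > 0`. -/
theorem stmt16 (n : ℕ) (hn : 1 ≤ n)
    (u₀ : EuclideanSpace ℝ (Fin n) → ℝ) (hc : Continuous u₀)
    (hsupp : HasCompactSupport u₀) (hnn : ∀ z, 0 ≤ u₀ z) (hne : ∃ z, u₀ z ≠ 0)
    (u : EuclideanSpace ℝ (Fin n) → ℝ → ℝ)
    (hu : ∀ y t, u y t = ∫ z, heatK n y z t * u₀ z) :
    ∀ (y : EuclideanSpace ℝ (Fin n)) (t : ℝ), 0 < t →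
      (Matrix.of fun i j : Fin n =>
        hess i j (fun z => Real.log (u z t)) y
          + (if i = j then 1 / (2 * t) else 0)).PosSemidef := by
  intro y t ht
  have hpos : ∀ y, 0 < u y t := by
    intro y
    obtain ⟨z, hz⟩ := hne
    rw [hu]
    have hK : ∀ z, 0 < heatK n y z t := fun z => by unfold heatK; positivity
    refine Continuous.integral_pos_of_hasCompactSupport_nonneg_nonzero (x := z) ?_ hsupp.mul_left
      (fun z => mul_nonneg (hK z).le (hnn z)) (mul_ne_zero (hK z).ne' hz)
    unfold heatK
    fun_prop
  have hsm : ContDiff ℝ 2 (fun z => Real.log (u z t)) := by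
    have h := aux_smooth (g := fun x => (4 * π * t) ^ (-(n : ℝ) / 2) *
      Real.exp (-‖x‖ ^ 2 / (4 * t))) hc hsupp (by
        have := contDiff_norm_sq ℝ (E := EuclideanSpace ℝ (Fin n)) (n := 2)
        exact contDiff_const.mul ((this.neg.div_const _).exp))
    have h2 : ContDiff ℝ 2 (fun z => u z t) := by
      simp only [hu, heatK]
      exact h
    exact h2.log (fun z => (hpos z).ne')
  set f := fun z => Real.log (u z t) with hfdef
  have hsec := aux_second hc hsupp hnn t ht (U := fun y => u y t) (fun y => hu y t) hpos hsm y
  refine Matrix.PosSemidef.of_dotProduct_mulVec_nonneg ?_ ?_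
  · ext i j
    have hs := (hsm.contDiffAt (x := y)).isSymmSndFDerivAt (by simp)
    simp only [Matrix.conjTranspose_apply, Matrix.of_apply, star_trivial, aux_hess hsm, eq_comm]
    rw [hs.eq]
  · intro x
    have hx : (WithLp.toLp 2 x : EuclideanSpace ℝ (Fin n)) =
        ∑ i, x i • EuclideanSpace.single i (1:ℝ) := by
      ext j
      simp [Finset.sum_apply, Pi.single_apply]
    have h := hsec (WithLp.toLp 2 x)
    have hn2 : ‖(WithLp.toLp 2 x : EuclideanSpace ℝ (Fin n))‖ ^ 2 = ∑ i, x i ^ 2 := by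
      simp [EuclideanSpace.norm_sq_eq]
    rw [hn2, hx] at h
    refine h.trans_eq (Eq.symm ?_)
    simp only [dotProduct, Matrix.mulVec, Matrix.of_apply, aux_hess hsm, star_trivial, map_sum,
      map_smul, _root_.sum_apply, _root_.smul_apply, smul_eq_mul,
      add_mul, Finset.sum_add_distrib, mul_add, Finset.mul_sum, Finset.sum_div, ite_mul, zero_mul,
      Finset.sum_ite_eq, Finset.mem_univ, if_true]
    congr 1
    · refine Finset.sum_congr rfl fun i _ => Finset.sum_congr rfl fun j _ => ?_
      have hs := (hsm.contDiffAt (x := y)).isSymmSndFDerivAt (by simp)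
      rw [← hfdef, hs.eq]
      ring
    · refine Finset.sum_congr rfl fun i _ => ?_
      simp
      ring
end
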